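/- For binary images P and G on the same h×w grid and any real ε with 0 < ε < 1/4, the closure of every connected component of FP = F_ε(P) ∩ B_{2ε}(G) is homeomorphic to a closed disk with finitely many open balls cut out: that is, homeomorphic to a set of the form D² \ (U₁ ∪ … ∪ Uₙ), where D² = {x ∈ ℝ² : ‖x‖₂ ≤ 1}, n ∈ ℕ, and U₁, …, Uₙ are open Euclidean disks whose closures are pairwise disjoint and contained in the open unit disk. The same holds for every connected component of FN = B_ε(P) ∩ F_{2ε}(G). -/

import Mathlib

open Set Metric

noncomputable section

/-- The plane modeled as `Fin 2 → ℝ` with the Pi (sup) norm. -/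
abbrev Plane : Type := Fin 2 → ℝ

/-- The Euclidean plane (for Euclidean-norm disks and annuli). -/
abbrev EPlane : Type := EuclideanSpace ℝ (Fin 2)

/-- The closed unit pixel `[i-1,i] × [j-1,j]` for a pixel index `(i,j)`. -/
def pixel (p : ℕ × ℕ) : Set Plane :=
  {x | x 0 ∈ Set.Icc ((p.1 : ℝ) - 1) (p.1 : ℝ) ∧ x 1 ∈ Set.Icc ((p.2 : ℝ) - 1) (p.2 : ℝ)}

/-- A binary image `S` lies on the `h × w` grid `{1,…,h} × {1,…,w}`. -/
def OnGrid (S : Set (ℕ × ℕ)) (h w : ℕ) : Prop :=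
  S ⊆ Set.Icc 1 h ×ˢ Set.Icc 1 w

/-- The foreground `F(S)` of a binary image. -/
def fg (S : Set (ℕ × ℕ)) : Set Plane := ⋃ p ∈ S, pixel p

/-- Closed `ε`-thickening `D_ε(X)` with respect to the sup norm. -/
def thick (ε : ℝ) (X : Set Plane) : Set Plane := {y | ∃ x ∈ X, ‖x - y‖ ≤ ε}

/-- `C` is a connected component of `A` (as a subset of the plane). -/
def IsCompOf (C A : Set Plane) : Prop := ∃ x ∈ A, C = connectedComponentIn A x

/-- Two subsets share a boundary edge if their closures intersect in an infinite set. -/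
def SharesEdge (C D : Set Plane) : Prop := (closure C ∩ closure D).Infinite

/-- `X` strongly deformation retracts onto `A`. -/
def SDR (X A : Set Plane) : Prop :=
  ∃ H : C(↥X × unitInterval, ↥X),
    (∀ x, H (x, 0) = x) ∧ (∀ x, ((H (x, 1) : Plane)) ∈ A) ∧
    (∀ a : ↥X, (a : Plane) ∈ A → ∀ t, H (a, t) = a)

def TPset (P G : Set (ℕ × ℕ)) (ε : ℝ) : Set Plane := thick ε (fg P) ∩ thick (2 * ε) (fg G)
def TNset (P G : Set (ℕ × ℕ)) (ε : ℝ) : Set Plane := (thick ε (fg P))ᶜ ∩ (thick (2 * ε) (fg G))ᶜ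
def FPset (P G : Set (ℕ × ℕ)) (ε : ℝ) : Set Plane := thick ε (fg P) ∩ (thick (2 * ε) (fg G))ᶜ
def FNset (P G : Set (ℕ × ℕ)) (ε : ℝ) : Set Plane := (thick ε (fg P))ᶜ ∩ thick (2 * ε) (fg G)

/-- A component `C` (of `FP` or `FN`) is regular: exactly one component of `TP` and exactly
one component of `TN` share a boundary edge with it. -/
def RegularComp (P G : Set (ℕ × ℕ)) (ε : ℝ) (C : Set Plane) : Prop :=
  (∃! T : Set Plane, IsCompOf T (TPset P G ε) ∧ SharesEdge T C) ∧
  (∃! T : Set Plane, IsCompOf T (TNset P G ε) ∧ SharesEdge T C)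

/-- The zero-loss hypothesis: every component of `FP` and every component of `FN` is regular. -/
def ZeroLoss (P G : Set (ℕ × ℕ)) (ε : ℝ) : Prop :=
  (∀ C : Set Plane, IsCompOf C (FPset P G ε) → RegularComp P G ε C) ∧
  (∀ C : Set Plane, IsCompOf C (FNset P G ε) → RegularComp P G ε C)

/-!
The components in question are bounded and, up to closure, connected unions of cells of a locally
finite rectangular grid, in which no `2 × 2` block contains exactly one diagonal. In such a union a
maximal vertical run of cells that has no neighbour on its left and touches its right neighbours in
an interval can be absorbed into them by a homeomorphism of the plane; the same applies to the runs
of the complement. Such a run exists, and absorbing it decreases the number of tops of columns,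
unless there is only one run left, or an enclosed white run, which is a hole. Filling that
hole and concluding by induction, one has to cut it out again after the homeomorphisms: these are
affine on a dense open set, so the hole is first shrunk to a place where they are affine and ends
up as a parallelogram. Finally a radial homeomorphism rounds the square and others round its holes.
-/

open Filter Topology

section GenericallyAffine

variable {E F G : Type*} [NormedAddCommGroup E] [NormedSpace ℝ E]
  [NormedAddCommGroup F] [NormedSpace ℝ F] [NormedAddCommGroup G] [NormedSpace ℝ G]

/-- `f` agrees with a continuous affine map near `x`. -/
def LocallyAffineAt (f : E → F) (x : E) : Prop :=
  ∃ A : E →ᴬ[ℝ] F, f =ᶠ[𝓝 x] A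

/-- `f` is locally affine at the points of a dense set. For a homeomorphism of the plane this
guarantees that every open set contains parallelograms whose images are parallelograms. -/
def GenericallyAffine (f : E → F) : Prop :=
  Dense {x | LocallyAffineAt f x}

lemma isOpen_setOf_locallyAffineAt (f : E → F) : IsOpen {x | LocallyAffineAt f x} := by
  rw [isOpen_iff_mem_nhds]
  rintro x ⟨A, hA⟩
  filter_upwards [hA.eventually_nhds] with y hy using ⟨A, hy⟩

namespace GenericallyAffine

lemma of_affine (A : E →ᴬ[ℝ] F) : GenericallyAffine A := fun _ =>
  subset_closure ⟨A, EventuallyEq.rfl⟩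

lemma affine_comp {f : E → F} (hf : GenericallyAffine f) (A : F →ᴬ[ℝ] G) :
    GenericallyAffine (A ∘ f) := by
  refine hf.mono ?_
  rintro x ⟨B, hB⟩
  exact ⟨A.comp B, hB.fun_comp A⟩

lemma prodMk {f : E → F} {g : E → G} (hf : GenericallyAffine f) (hg : GenericallyAffine g) :
    GenericallyAffine fun x => (f x, g x) := by
  refine (hf.inter_of_isOpen_left hg (isOpen_setOf_locallyAffineAt f)).mono ?_
  rintro x ⟨⟨A, hA⟩, ⟨B, hB⟩⟩
  exact ⟨A.prod B, hA.prodMk hB⟩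

lemma comp_homeomorph {f : F → G} {Φ : E ≃ₜ F} (hf : GenericallyAffine f)
    (hΦ : GenericallyAffine Φ) : GenericallyAffine (f ∘ Φ) := by
  refine (hΦ.inter_of_isOpen_left (hf.preimage Φ.isOpenMap)
    (isOpen_setOf_locallyAffineAt Φ)).mono ?_
  rintro x ⟨⟨A, hA⟩, ⟨B, hB⟩⟩
  exact ⟨B.comp A, (hB.comp_tendsto Φ.continuous.continuousAt).trans (hA.fun_comp B)⟩

lemma add {f g : E → F} (hf : GenericallyAffine f) (hg : GenericallyAffine g) :
    GenericallyAffine fun x => f x + g x :=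
  (hf.prodMk hg).affine_comp
    (ContinuousLinearMap.fst ℝ F F + ContinuousLinearMap.snd ℝ F F).toContinuousAffineMap

lemma const_smul {f : E → F} (hf : GenericallyAffine f) (k : ℝ) :
    GenericallyAffine fun x => k • f x :=
  hf.affine_comp (k • ContinuousLinearMap.id ℝ F).toContinuousAffineMap

lemma const (c : F) : GenericallyAffine fun _ : E => c :=
  of_affine (ContinuousAffineMap.const ℝ E c)

lemma sub {f g : E → F} (hf : GenericallyAffine f) (hg : GenericallyAffine g) :
    GenericallyAffine fun x => f x - g x :=
  (hf.prodMk hg).affine_comp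
    (ContinuousLinearMap.fst ℝ F F - ContinuousLinearMap.snd ℝ F F).toContinuousAffineMap

/- The frontier of the closed set `{f ≤ g}` has empty interior; off it, the maximum is locally
one of the two functions. -/
lemma max {f g : E → ℝ} (hf : GenericallyAffine f) (hg : GenericallyAffine g)
    (hf' : Continuous f) (hg' : Continuous g) :
    GenericallyAffine fun x => max (f x) (g x) := by
  have hclosed : IsClosed {x | f x ≤ g x} := isClosed_le hf' hg'
  have hdense : Dense (frontier {x | f x ≤ g x})ᶜ :=
    interior_eq_empty_iff_dense_compl.mp (interior_frontier hclosed)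
  refine ((hf.inter_of_isOpen_left hg (isOpen_setOf_locallyAffineAt f)).inter_of_isOpen_right
    hdense isClosed_frontier.isOpen_compl).mono ?_
  rintro x ⟨⟨⟨A, hA⟩, ⟨B, hB⟩⟩, hx⟩
  rw [compl_frontier_eq_union_interior] at hx
  rcases hx with hx | hx <;> rw [mem_interior_iff_mem_nhds] at hx
  · refine ⟨B, ?_⟩
    filter_upwards [hB, hx] with y hy hle using (max_eq_right hle).trans hy
  · refine ⟨A, ?_⟩
    filter_upwards [hA, hx] with y hy (hgt : ¬f y ≤ g y)
      using (max_eq_left (le_of_not_ge hgt)).trans hy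

lemma min {f g : E → ℝ} (hf : GenericallyAffine f) (hg : GenericallyAffine g)
    (hf' : Continuous f) (hg' : Continuous g) :
    GenericallyAffine fun x => min (f x) (g x) := by
  convert (hf.add hg).sub (hf.max hg hf' hg') using 2 with x
  rw [← min_add_max (f x) (g x), add_sub_cancel_right]

lemma fst : GenericallyAffine (Prod.fst : E × F → E) :=
  of_affine (ContinuousLinearMap.fst ℝ E F).toContinuousAffineMap

lemma snd : GenericallyAffine (Prod.snd : E × F → F) :=
  of_affine (ContinuousLinearMap.snd ℝ E F).toContinuousAffineMap

end GenericallyAffine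

end GenericallyAffine

section OrderIso

variable {α β : Type*} [LinearOrder α] [LinearOrder β]

/-- The pointwise maximum of two order isomorphisms; its inverse is the minimum of the inverses. -/
def maxIso (e f : α ≃o β) : α ≃o β where
  toFun x := max (e x) (f x)
  invFun y := min (e.symm y) (f.symm y)
  left_inv x := by
    rcases le_total (e x) (f x) with h | h
    · simpa [h] using e.le_symm_apply.mpr h
    · simpa [h] using f.le_symm_apply.mpr h
  right_inv y := by
    rcases le_total (e.symm y) (f.symm y) with h | h
    · simpa [h] using f.le_symm_apply.mp h
    · simpa [h] using e.le_symm_apply.mp h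
  map_rel_iff' := StrictMono.le_iff_le fun _ _ h =>
    max_lt_max (e.strictMono h) (f.strictMono h)

/-- The pointwise minimum of two order isomorphisms. -/
def minIso (e f : α ≃o β) : α ≃o β :=
  (maxIso e.symm f.symm).symm

end OrderIso

lemma image_homeomorph_trans {X Y Z : Type*} [TopologicalSpace X] [TopologicalSpace Y]
    [TopologicalSpace Z] (Φ : X ≃ₜ Y) (Ψ : Y ≃ₜ Z) (s : Set X) :
    (Φ.trans Ψ) '' s = Ψ '' (Φ '' s) :=
  image_comp Ψ Φ s

/-- The closed set `Q` can be pushed into any `A ⊇ T` that is disjoint from `W`, by a generically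
affine homeomorphism of the plane supported in `K`: `T` is the side of `Q` along which `A` has to
touch it, and `W` the white neighbourhood of the rest of `Q`. -/
def IsAbsorbable (Q K W T : Set (ℝ × ℝ)) : Prop :=
  ∃ Φ : ℝ × ℝ ≃ₜ ℝ × ℝ, GenericallyAffine Φ ∧ (∀ z ∉ K, Φ z = z) ∧
    ∀ A, Disjoint A W → T ⊆ A → Φ '' (A ∪ Q) = A

namespace IsAbsorbable

variable {Q K W T Q' K' W' T' : Set (ℝ × ℝ)}

lemma mono (h : IsAbsorbable Q K W T) (hK : K ⊆ K') (hW : W ⊆ W') (hT : T ⊆ T') :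
    IsAbsorbable Q K' W' T' := by
  obtain ⟨Φ, hΦ, hsupp, habs⟩ := h
  exact ⟨Φ, hΦ, fun z hz => hsupp z (notMem_subset hK hz),
    fun A hAW hTA => habs A (hAW.mono_right hW) (hT.trans hTA)⟩

lemma image (h : IsAbsorbable Q K W T) (M : ℝ × ℝ ≃ₜ ℝ × ℝ) (hM : GenericallyAffine M)
    (hM' : GenericallyAffine M.symm) : IsAbsorbable (M '' Q) (M '' K) (M '' W) (M '' T) := by
  obtain ⟨Φ, hΦ, hsupp, habs⟩ := h
  refine ⟨M.symm.trans (Φ.trans M), (hM.comp_homeomorph hΦ).comp_homeomorph hM', ?_, ?_⟩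
  · intro z hz
    have hz' : M.symm z ∉ K := fun h => hz ⟨_, h, M.apply_symm_apply z⟩
    simp [hsupp _ hz']
  · intro A hAW hTA
    obtain ⟨B, rfl⟩ : ∃ B, M '' B = A := ⟨M ⁻¹' A, M.image_preimage A⟩
    have hB := habs B ((disjoint_image_iff M.injective).mp hAW)
      ((image_subset_image_iff M.injective).mp hTA)
    rw [← image_union, image_image]
    simp only [Homeomorph.trans_apply, Homeomorph.symm_apply_apply]
    rw [← image_image M Φ, hB]

lemma union (h : IsAbsorbable Q K W T) (h' : IsAbsorbable Q' K' W' T') (hd : Disjoint Q' W) :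
    IsAbsorbable (Q ∪ Q') (K ∪ K') (W ∪ W') (T \ Q' ∪ T') := by
  obtain ⟨Φ, hΦ, hsupp, habs⟩ := h
  obtain ⟨Ψ, hΨ, hsupp', habs'⟩ := h'
  refine ⟨Φ.trans Ψ, hΨ.comp_homeomorph hΦ, ?_, ?_⟩
  · intro z hz
    rw [mem_union, not_or] at hz
    simp [hsupp z hz.1, hsupp' z hz.2]
  · intro A hAW hTA
    rw [disjoint_union_right] at hAW
    obtain ⟨hT, hT'⟩ := union_subset_iff.mp hTA
    have hΦA := habs (A ∪ Q') (hAW.1.union_left hd)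
      (union_comm A Q' ▸ sdiff_subset_iff.mp hT)
    have hΨA := habs' A hAW.2 hT'
    rw [union_comm Q, ← union_assoc, image_homeomorph_trans, hΦA, hΨA]

end IsAbsorbable

/-- The increasing piecewise linear bijection of `ℝ` that fixes `-αl` and `(1+α)l`, sends `l` to
`0`, is affine in between, and is the identity elsewhere. -/
def triangleFibre (α l : ℝ) (hα : 0 < α) : ℝ ≃o ℝ :=
  minIso (OrderIso.refl ℝ) (maxIso
    ((OrderIso.subRight l).trans (OrderIso.mulLeft₀ (α / (1 + α)) (by positivity)))
    ((OrderIso.subRight l).trans (OrderIso.mulLeft₀ ((1 + α) / α) (by positivity))))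

section triangleFibre

variable {α l s : ℝ} (hα : 0 < α)
include hα

lemma triangleFibre_apply : triangleFibre α l hα s =
    min s (max (α / (1 + α) * (s - l)) ((1 + α) / α * (s - l))) := rfl

lemma triangleFibre_symm_apply : (triangleFibre α l hα).symm s =
    max s (min ((α / (1 + α))⁻¹ * s + l) (((1 + α) / α)⁻¹ * s + l)) := rfl

lemma triangleFibre_apex (hl : 0 ≤ l) : triangleFibre α l hα l = 0 := by
  simp [triangleFibre_apply, hl]

lemma triangleFibre_of_le (hs : s ≤ -α * l) : triangleFibre α l hα s = s := by
  refine min_eq_left (le_max_of_le_left ?_)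
  change s ≤ α / (1 + α) * (s - l)
  rw [div_mul_eq_mul_div, le_div_iff₀ (by positivity)]
  linarith

lemma triangleFibre_of_ge (hs : (1 + α) * l ≤ s) : triangleFibre α l hα s = s := by
  refine min_eq_left (le_max_of_le_right ?_)
  change s ≤ (1 + α) / α * (s - l)
  rw [div_mul_eq_mul_div, le_div_iff₀ hα]
  linarith

end triangleFibre

/-- The homeomorphism that acts by `triangleFibre` on the vertical lines. -/
def triangleHomeomorph (α : ℝ) (hα : 0 < α) : ℝ × ℝ ≃ₜ ℝ × ℝ where
  toFun z := (z.1, triangleFibre α (1 - |z.1|) hα z.2)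
  invFun z := (z.1, (triangleFibre α (1 - |z.1|) hα).symm z.2)
  left_inv z := by simp
  right_inv z := by simp
  continuous_toFun := by
    simp only [triangleFibre_apply]
    fun_prop
  continuous_invFun := by
    simp only [triangleFibre_symm_apply]
    fun_prop

lemma genericallyAffine_triangleHomeomorph (α : ℝ) (hα : 0 < α) :
    GenericallyAffine (triangleHomeomorph α hα) := by
  have hfst : GenericallyAffine fun z : ℝ × ℝ => z.1 := .fst
  have hneg : GenericallyAffine fun z : ℝ × ℝ => -z.1 := by
    simpa only [neg_one_smul] using hfst.const_smul (-1)
  have habs : GenericallyAffine fun z : ℝ × ℝ => |z.1| :=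
    hfst.max hneg (by fun_prop) (by fun_prop)
  have hdist : GenericallyAffine fun z : ℝ × ℝ => z.2 - (1 - |z.1|) :=
    .sub .snd (.sub (.const 1) habs)
  have heq : ⇑(triangleHomeomorph α hα) = fun z : ℝ × ℝ => (z.1, min z.2
    (max (α / (1 + α) * (z.2 - (1 - |z.1|))) ((1 + α) / α * (z.2 - (1 - |z.1|))))) := rfl
  rw [heq]
  exact .prodMk .fst (.min .snd (.max (hdist.const_smul _) (hdist.const_smul _)
    (by fun_prop) (by fun_prop)) (by fun_prop) (by fun_prop))

lemma isAbsorbable_triangle {α : ℝ} (hα : 0 < α) : IsAbsorbable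
    {z | z.2 ∈ Icc 0 (1 - |z.1|)} {z | z.2 ∈ Icc (-α * (1 - |z.1|)) ((1 + α) * (1 - |z.1|))}
    {z | z.2 ∈ Ioc 0 ((1 + α) * (1 - |z.1|))} {z | z.2 ∈ Icc (-α * (1 - |z.1|)) 0} := by
  have hsupp : ∀ z ∉ {z : ℝ × ℝ | z.2 ∈ Icc (-α * (1 - |z.1|)) ((1 + α) * (1 - |z.1|))},
      triangleHomeomorph α hα z = z := by
    rintro ⟨u, s⟩ hz
    refine Prod.ext rfl ?_
    rcases not_and_or.mp hz with h | h
    · exact triangleFibre_of_le hα (not_le.mp h).le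
    · exact triangleFibre_of_ge hα (not_le.mp h).le
  refine ⟨triangleHomeomorph α hα, genericallyAffine_triangleHomeomorph α hα, hsupp, ?_⟩
  intro A hW hT
  suffices A ∪ {z | z.2 ∈ Icc 0 (1 - |z.1|)} = triangleHomeomorph α hα ⁻¹' A by
    rw [this, Homeomorph.image_preimage]
  ext z
  by_cases hz : z.2 ∈ Icc (-α * (1 - |z.1|)) ((1 + α) * (1 - |z.1|))
  swap
  · rw [mem_preimage, hsupp z hz, mem_union, or_iff_left]
    rintro ⟨h0, hl⟩
    exact hz ⟨by nlinarith, by nlinarith⟩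
  obtain ⟨u, s⟩ := z
  have hl : 0 ≤ 1 - |u| := by nlinarith [hz.1.trans hz.2]
  rcases le_or_gt s (1 - |u|) with hs | hs
  · refine iff_of_true ?_ (hT ⟨?_, ?_⟩)
    · rcases le_total s 0 with h0 | h0
      · exact Or.inl (hT ⟨hz.1, h0⟩)
      · exact Or.inr ⟨h0, hs⟩
    · rw [← triangleFibre_of_le hα le_rfl]
      exact (triangleFibre α _ hα).monotone hz.1
    · rw [← triangleFibre_apex hα hl]
      exact (triangleFibre α _ hα).monotone hs
  · refine iff_of_false ?_ fun h => hW.notMem_of_mem_left h ⟨?_, ?_⟩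
    · rintro (h | h)
      · exact hW.notMem_of_mem_left h ⟨hl.trans_lt hs, hz.2⟩
      · exact hs.not_ge h.2
    · rw [← triangleFibre_apex hα hl]
      exact (triangleFibre α _ hα).strictMono hs
    · rw [← triangleFibre_of_ge hα le_rfl]
      exact (triangleFibre α _ hα).monotone hz.2

/-- The affine coordinates in which the upper left half of the unit square is the standard
triangle. -/
@[simps apply]
def upperTriangleCoords : ℝ × ℝ ≃ₜ ℝ × ℝ where
  toFun z := ((1 + z.1 - z.2) / 2, (1 + z.1 + z.2) / 2)
  invFun z := (z.1 + z.2 - 1, z.2 - z.1)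
  left_inv z := by ext <;> simp only <;> ring
  right_inv z := by ext <;> simp only <;> ring

/-- The affine coordinates in which the lower right half of the unit square is the standard
triangle. -/
@[simps apply]
def lowerTriangleCoords : ℝ × ℝ ≃ₜ ℝ × ℝ where
  toFun z := (1 - z.2, (1 + z.1 - z.2) / 2)
  invFun z := (2 * z.2 - z.1, 1 - z.1)
  left_inv z := by ext <;> simp only <;> ring
  right_inv z := by ext <;> simp only <;> ring

lemma genericallyAffine_linear_add_const (a b c : ℝ) :
    GenericallyAffine fun z : ℝ × ℝ => a * z.1 + b * z.2 + c :=
  ((GenericallyAffine.fst.const_smul a).add (GenericallyAffine.snd.const_smul b)).add (.const c)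

lemma genericallyAffine_upperTriangleCoords : GenericallyAffine upperTriangleCoords := by
  convert (genericallyAffine_linear_add_const (1 / 2) (-1 / 2) (1 / 2)).prodMk
    (genericallyAffine_linear_add_const (1 / 2) (1 / 2) (1 / 2)) using 2 with z
  ext <;> simp [upperTriangleCoords] <;> ring

lemma genericallyAffine_upperTriangleCoords_symm :
    GenericallyAffine upperTriangleCoords.symm := by
  convert (genericallyAffine_linear_add_const 1 1 (-1)).prodMk
    (genericallyAffine_linear_add_const (-1) 1 0) using 2 with z
  ext <;> simp [upperTriangleCoords] <;> ring

lemma genericallyAffine_lowerTriangleCoords : GenericallyAffine lowerTriangleCoords := by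
  convert (genericallyAffine_linear_add_const 0 (-1) 1).prodMk
    (genericallyAffine_linear_add_const (1 / 2) (-1 / 2) (1 / 2)) using 2 with z
  ext <;> simp [lowerTriangleCoords] <;> ring

lemma genericallyAffine_lowerTriangleCoords_symm :
    GenericallyAffine lowerTriangleCoords.symm := by
  convert (genericallyAffine_linear_add_const (-1) 2 0).prodMk
    (genericallyAffine_linear_add_const (-1) 0 1) using 2 with z
  ext <;> simp [lowerTriangleCoords] <;> ring

lemma bounds_of_mem_kite {α u s : ℝ} (hα : 0 < α) (hα1 : α ≤ 1)
    (h : s ∈ Icc (-α * (1 - |u|)) ((1 + α) * (1 - |u|))) :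
    |u| ≤ 1 ∧ -(1 - |u|) ≤ s ∧ -α ≤ s ∧ s ≤ (1 - |u|) + α := by
  have hu : |u| ≤ 1 := by nlinarith [h.1, h.2]
  have := abs_nonneg u
  refine ⟨hu, ?_, ?_, ?_⟩ <;> nlinarith [h.1, h.2]

lemma isAbsorbable_upperTriangle {α : ℝ} (hα : 0 < α) (hα1 : α ≤ 1) : IsAbsorbable
    {z | 0 ≤ z.1 ∧ z.1 ≤ z.2 ∧ z.2 ≤ 1} (Icc (-α) (1 + α) ×ˢ Icc (-α) (1 + α))
    ({z | z.1 < z.2} ∩ Ico (-α) 1 ×ˢ Icc (-α) (1 + α)) {z | 0 ≤ z.2 ∧ z.2 ≤ z.1 ∧ z.1 ≤ 1} := by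
  have himage : upperTriangleCoords '' {z | z.2 ∈ Icc 0 (1 - |z.1|)} =
      {z | 0 ≤ z.1 ∧ z.1 ≤ z.2 ∧ z.2 ≤ 1} := by
    rw [← Homeomorph.preimage_symm]
    ext ⟨x, y⟩
    change (0 ≤ y - x ∧ y - x ≤ 1 - |x + y - 1|) ↔ (0 ≤ x ∧ x ≤ y ∧ y ≤ 1)
    rw [le_sub_comm (a := y - x), abs_le]
    constructor <;> rintro ⟨h1, h2, h3⟩ <;> refine ⟨?_, ?_, ?_⟩ <;> linarith
  rw [← himage]
  refine ((isAbsorbable_triangle hα).image _ genericallyAffine_upperTriangleCoords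
    genericallyAffine_upperTriangleCoords_symm).mono ?_ ?_ ?_ <;>
      rw [image_subset_iff] <;> rintro ⟨u, s⟩ hz <;>
      have hul := le_abs_self u <;> have hun := neg_abs_le u
  · obtain ⟨-, h1, -, h3⟩ := bounds_of_mem_kite hα hα1 hz
    refine ⟨⟨?_, ?_⟩, ?_, ?_⟩ <;> simp only [upperTriangleCoords_apply] <;> linarith
  · obtain ⟨hu, -, -, h3⟩ := bounds_of_mem_kite hα hα1 ⟨by nlinarith [hz.1, hz.2], hz.2⟩
    have hs : 0 < s := hz.1
    refine ⟨?_, ⟨?_, ?_⟩, ?_, ?_⟩ <;>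
      simp only [upperTriangleCoords_apply, mem_ofPred_eq] <;> linarith
  · obtain ⟨-, h1, -, -⟩ := bounds_of_mem_kite hα hα1 ⟨hz.1, by nlinarith [hz.1, hz.2]⟩
    have hs : s ≤ 0 := hz.2
    refine ⟨?_, ?_, ?_⟩ <;> simp only [upperTriangleCoords_apply] <;> linarith

lemma isAbsorbable_lowerTriangle {α : ℝ} (hα : 0 < α) (hα1 : α ≤ 1) : IsAbsorbable
    {z | 0 ≤ z.2 ∧ z.2 ≤ z.1 ∧ z.1 ≤ 1} (Icc (-α) (1 + α) ×ˢ Icc (-α) (1 + α))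
    (Ico (-α) 1 ×ˢ Icc (-α) (1 + α)) (Icc 1 (1 + α) ×ˢ Icc 0 1) := by
  have himage : lowerTriangleCoords '' {z | z.2 ∈ Icc 0 (1 - |z.1|)} =
      {z | 0 ≤ z.2 ∧ z.2 ≤ z.1 ∧ z.1 ≤ 1} := by
    rw [← Homeomorph.preimage_symm]
    ext ⟨x, y⟩
    change (0 ≤ 1 - x ∧ 1 - x ≤ 1 - |2 * y - x|) ↔ (0 ≤ y ∧ y ≤ x ∧ x ≤ 1)
    rw [le_sub_comm (a := 1 - x), abs_le]
    constructor <;> rintro ⟨h1, h2, h3⟩ <;> refine ⟨?_, ?_, ?_⟩ <;> linarith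
  rw [← himage]
  refine ((isAbsorbable_triangle hα).image _ genericallyAffine_lowerTriangleCoords
    genericallyAffine_lowerTriangleCoords_symm).mono ?_ ?_ ?_ <;>
      rw [image_subset_iff] <;> rintro ⟨u, s⟩ hz <;>
      have hul := le_abs_self u <;> have hun := neg_abs_le u
  · obtain ⟨-, h1, h2, h3⟩ := bounds_of_mem_kite hα hα1 hz
    refine ⟨⟨?_, ?_⟩, ?_, ?_⟩ <;> simp only [lowerTriangleCoords_apply] <;> linarith
  · obtain ⟨hu, -, -, h3⟩ := bounds_of_mem_kite hα hα1 ⟨by nlinarith [hz.1, hz.2], hz.2⟩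
    have hs : 0 < s := hz.1
    refine ⟨⟨?_, ?_⟩, ?_, ?_⟩ <;> simp only [lowerTriangleCoords_apply] <;> linarith
  · obtain ⟨hu, h1, h2, -⟩ := bounds_of_mem_kite hα hα1 ⟨hz.1, by nlinarith [hz.1, hz.2]⟩
    have hs : s ≤ 0 := hz.2
    refine ⟨⟨?_, ?_⟩, ?_, ?_⟩ <;> simp only [lowerTriangleCoords_apply] <;> linarith

/- The square is the union of two triangles: the upper left one is first pushed into the lower
right one, which is then pushed out through the east side. -/
lemma isAbsorbable_unitSquare {α : ℝ} (hα : 0 < α) (hα1 : α ≤ 1) : IsAbsorbable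
    (Icc 0 1 ×ˢ Icc 0 1) (Icc (-α) (1 + α) ×ˢ Icc (-α) (1 + α))
    (Ico (-α) 1 ×ˢ Icc (-α) (1 + α)) (Icc 1 (1 + α) ×ˢ Icc 0 1) := by
  have hQ : (Icc 0 1 ×ˢ Icc 0 1 : Set (ℝ × ℝ)) =
      {z | 0 ≤ z.1 ∧ z.1 ≤ z.2 ∧ z.2 ≤ 1} ∪ {z | 0 ≤ z.2 ∧ z.2 ≤ z.1 ∧ z.1 ≤ 1} := by
    ext ⟨x, y⟩
    constructor
    · rintro ⟨⟨hx0, hx1⟩, hy0, hy1⟩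
      exact (le_total x y).imp (fun h => ⟨hx0, h, hy1⟩) (fun h => ⟨hy0, h, hx1⟩)
    · rintro (⟨h1, h2, h3⟩ | ⟨h1, h2, h3⟩)
      · exact ⟨⟨h1, h2.trans h3⟩, h1.trans h2, h3⟩
      · exact ⟨⟨h1.trans h2, h3⟩, h1, h2.trans h3⟩
  rw [hQ]
  refine ((isAbsorbable_upperTriangle hα hα1).union (isAbsorbable_lowerTriangle hα hα1) ?_).mono
    (union_self _).subset (union_subset inter_subset_right subset_rfl)
    (by rw [sdiff_self, empty_union])
  exact disjoint_left.mpr fun z hz hz' => hz'.1.not_ge hz.2.1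

lemma genericallyAffine_prodMap_affineHomeomorph (a b c d : ℝ) (ha : a ≠ 0) (hc : c ≠ 0) :
    GenericallyAffine ((affineHomeomorph a b ha).prodCongr (affineHomeomorph c d hc)) := by
  convert (genericallyAffine_linear_add_const a 0 b).prodMk
    (genericallyAffine_linear_add_const 0 c d) using 2 with z
  ext <;> simp

lemma genericallyAffine_prodMap_affineHomeomorph_symm (a b c d : ℝ) (ha : a ≠ 0) (hc : c ≠ 0) :
    GenericallyAffine ((affineHomeomorph a b ha).prodCongr (affineHomeomorph c d hc)).symm := by
  convert (genericallyAffine_linear_add_const a⁻¹ 0 (-(b / a))).prodMk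
    (genericallyAffine_linear_add_const 0 c⁻¹ (-(d / c))) using 2 with z
  ext <;> simp <;> ring

section Rectangle

variable {x₀ x₁ y₀ y₁ δ : ℝ}

lemma isAbsorbable_rectangle_east (hx : x₀ < x₁) (hy : y₀ < y₁) (hδ : 0 < δ) : IsAbsorbable
    (Icc x₀ x₁ ×ˢ Icc y₀ y₁) (Icc (x₀ - δ) (x₁ + δ) ×ˢ Icc (y₀ - δ) (y₁ + δ))
    (Ico (x₀ - δ) x₁ ×ˢ Icc (y₀ - δ) (y₁ + δ)) (Icc x₁ (x₁ + δ) ×ˢ Icc y₀ y₁) := by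
  have hw : 0 < x₁ - x₀ := sub_pos.mpr hx
  have hh : 0 < y₁ - y₀ := sub_pos.mpr hy
  obtain ⟨α, hα, hαle⟩ : ∃ α : ℝ, 0 < α ∧ α ≤ min 1 (min (δ / (x₁ - x₀)) (δ / (y₁ - y₀))) :=
    ⟨_, by positivity, le_rfl⟩
  simp only [le_min_iff, le_div_iff₀ hw, le_div_iff₀ hh] at hαle
  obtain ⟨hα1, hαw, hαh⟩ := hαle
  have h := (isAbsorbable_unitSquare hα hα1).image _
    (genericallyAffine_prodMap_affineHomeomorph _ x₀ _ y₀ hw.ne' hh.ne')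
    (genericallyAffine_prodMap_affineHomeomorph_symm _ x₀ _ y₀ hw.ne' hh.ne')
  simp only [Homeomorph.coe_prodCongr, prodMap_image_prod, affineHomeomorph_image_Icc _ _ _ _ hw,
    affineHomeomorph_image_Icc _ _ _ _ hh, affineHomeomorph_image_Ico _ _ _ _ hw] at h
  have hQ : Icc ((x₁ - x₀) * 0 + x₀) ((x₁ - x₀) * 1 + x₀) ×ˢ
      Icc ((y₁ - y₀) * 0 + y₀) ((y₁ - y₀) * 1 + y₀) = Icc x₀ x₁ ×ˢ Icc y₀ y₁ := by
    simp only [mul_zero, zero_add, mul_one, sub_add_cancel]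
  rw [hQ] at h
  refine h.mono (prod_mono (Icc_subset_Icc ?_ ?_) (Icc_subset_Icc ?_ ?_))
    (prod_mono (Ico_subset_Ico ?_ ?_) (Icc_subset_Icc ?_ ?_))
    (prod_mono (Icc_subset_Icc ?_ ?_) (Icc_subset_Icc ?_ ?_)) <;> linarith

lemma isAbsorbable_rectangle_west (hx : x₀ < x₁) (hy : y₀ < y₁) (hδ : 0 < δ) : IsAbsorbable
    (Icc x₀ x₁ ×ˢ Icc y₀ y₁) (Icc (x₀ - δ) (x₁ + δ) ×ˢ Icc (y₀ - δ) (y₁ + δ))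
    (Ioc x₀ (x₁ + δ) ×ˢ Icc (y₀ - δ) (y₁ + δ)) (Icc (x₀ - δ) x₀ ×ˢ Icc y₀ y₁) := by
  have hneg : GenericallyAffine ((Homeomorph.neg ℝ).prodCongr (.refl ℝ)) := by
    convert (genericallyAffine_linear_add_const (-1) 0 0).prodMk
      (genericallyAffine_linear_add_const 0 1 0) using 2 with z
    ext <;> simp
  have h := (isAbsorbable_rectangle_east (neg_lt_neg hx) hy hδ).image _ hneg hneg
  rw [Homeomorph.coe_prodCongr] at h
  simpa only [prodMap_image_prod, Homeomorph.coe_neg, image_neg_eq_neg, neg_Icc, neg_Ico, neg_neg,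
    Homeomorph.refl_apply, image_id, image_id', neg_add', neg_sub', sub_neg_eq_add] using h

lemma IsAbsorbable.swap {Q K W T : Set (ℝ × ℝ)} (h : IsAbsorbable Q K W T) :
    IsAbsorbable (Prod.swap '' Q) (Prod.swap '' K) (Prod.swap '' W) (Prod.swap '' T) :=
  have hswap : GenericallyAffine (Homeomorph.prodComm ℝ ℝ) := .prodMk .snd .fst
  h.image (Homeomorph.prodComm ℝ ℝ) hswap hswap

lemma isAbsorbable_rectangle_north (hx : x₀ < x₁) (hy : y₀ < y₁) (hδ : 0 < δ) : IsAbsorbable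
    (Icc x₀ x₁ ×ˢ Icc y₀ y₁) (Icc (x₀ - δ) (x₁ + δ) ×ˢ Icc (y₀ - δ) (y₁ + δ))
    (Icc (x₀ - δ) (x₁ + δ) ×ˢ Ico (y₀ - δ) y₁) (Icc x₀ x₁ ×ˢ Icc y₁ (y₁ + δ)) := by
  simpa only [image_swap_prod] using (isAbsorbable_rectangle_east hy hx hδ).swap

lemma isAbsorbable_rectangle_south (hx : x₀ < x₁) (hy : y₀ < y₁) (hδ : 0 < δ) : IsAbsorbable
    (Icc x₀ x₁ ×ˢ Icc y₀ y₁) (Icc (x₀ - δ) (x₁ + δ) ×ˢ Icc (y₀ - δ) (y₁ + δ))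
    (Icc (x₀ - δ) (x₁ + δ) ×ˢ Ioc y₀ (y₁ + δ)) (Icc x₀ x₁ ×ˢ Icc (y₀ - δ) y₀) := by
  simpa only [image_swap_prod] using (isAbsorbable_rectangle_west hy hx hδ).swap

/- The four strips around the small rectangle are absorbed one after the other. -/
lemma exists_homeomorph_shrink_rectangle {x₀' x₁' y₀' y₁' : ℝ} (hx : x₀ < x₀') (hx' : x₀' < x₁')
    (hx'' : x₁' < x₁) (hy : y₀ < y₀') (hy' : y₀' < y₁') (hy'' : y₁' < y₁) (hδ : 0 < δ) :
    ∃ Φ : ℝ × ℝ ≃ₜ ℝ × ℝ, GenericallyAffine Φ ∧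
      (∀ z ∉ Icc (x₀ - δ) (x₁ + δ) ×ˢ Icc (y₀ - δ) (y₁ + δ), Φ z = z) ∧
      Φ '' (Icc x₀ x₁ ×ˢ Icc y₀ y₁) = Icc x₀' x₁' ×ˢ Icc y₀' y₁' := by
  obtain ⟨η, hη, hηle⟩ : ∃ η : ℝ, 0 < η ∧ η ≤ min δ (min (x₁' - x₀') (y₁' - y₀')) :=
    ⟨_, lt_min hδ (lt_min (sub_pos.mpr hx') (sub_pos.mpr hy')), le_rfl⟩
  obtain ⟨hηδ, hηx, hηy⟩ := by simpa only [le_min_iff] using hηle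
  obtain ⟨Φ₁, hΦ₁, hsupp₁, habs₁⟩ :=
    isAbsorbable_rectangle_east hx (hy.trans (hy'.trans hy'')) hη
  obtain ⟨Φ₂, hΦ₂, hsupp₂, habs₂⟩ :=
    isAbsorbable_rectangle_west hx'' (hy.trans (hy'.trans hy'')) hη
  obtain ⟨Φ₃, hΦ₃, hsupp₃, habs₃⟩ := isAbsorbable_rectangle_north hx' hy hη
  obtain ⟨Φ₄, hΦ₄, hsupp₄, habs₄⟩ := isAbsorbable_rectangle_south hx' hy'' hη
  have himage₁ : Φ₁ '' (Icc x₀ x₁ ×ˢ Icc y₀ y₁) = Icc x₀' x₁ ×ˢ Icc y₀ y₁ := by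
    rw [← habs₁ (Icc x₀' x₁ ×ˢ Icc y₀ y₁)
      (disjoint_left.mpr fun z hz hz' => hz'.1.2.not_ge hz.1.1)
      (prod_mono (Icc_subset_Icc le_rfl (by linarith)) le_rfl), ← union_prod, union_comm,
      Icc_union_Icc_eq_Icc (by linarith) (by linarith)]
  have himage₂ : Φ₂ '' (Icc x₀' x₁ ×ˢ Icc y₀ y₁) = Icc x₀' x₁' ×ˢ Icc y₀ y₁ := by
    rw [← habs₂ (Icc x₀' x₁' ×ˢ Icc y₀ y₁)
      (disjoint_left.mpr fun z hz hz' => hz'.1.1.not_ge hz.1.2)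
      (prod_mono (Icc_subset_Icc (by linarith) le_rfl) le_rfl), ← union_prod,
      Icc_union_Icc_eq_Icc (by linarith) (by linarith)]
  have himage₃ : Φ₃ '' (Icc x₀' x₁' ×ˢ Icc y₀ y₁) = Icc x₀' x₁' ×ˢ Icc y₀' y₁ := by
    rw [← habs₃ (Icc x₀' x₁' ×ˢ Icc y₀' y₁)
      (disjoint_left.mpr fun z hz hz' => hz'.2.2.not_ge hz.2.1)
      (prod_mono le_rfl (Icc_subset_Icc le_rfl (by linarith))), ← prod_union, union_comm,
      Icc_union_Icc_eq_Icc (by linarith) (by linarith)]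
  have himage₄ : Φ₄ '' (Icc x₀' x₁' ×ˢ Icc y₀' y₁) = Icc x₀' x₁' ×ˢ Icc y₀' y₁' := by
    rw [← habs₄ (Icc x₀' x₁' ×ˢ Icc y₀' y₁')
      (disjoint_left.mpr fun z hz hz' => hz'.2.1.not_ge hz.2.2)
      (prod_mono le_rfl (Icc_subset_Icc (by linarith) le_rfl)), ← prod_union,
      Icc_union_Icc_eq_Icc (by linarith) (by linarith)]
  refine ⟨((Φ₁.trans Φ₂).trans Φ₃).trans Φ₄,
    hΦ₄.comp_homeomorph (hΦ₃.comp_homeomorph (hΦ₂.comp_homeomorph hΦ₁)), fun z hz => ?_, ?_⟩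
  · simp only [Homeomorph.trans_apply]
    rw [hsupp₁, hsupp₂, hsupp₃, hsupp₄]
    all_goals
      refine notMem_subset (prod_mono (Icc_subset_Icc ?_ ?_) (Icc_subset_Icc ?_ ?_)) hz <;> linarith
  · simp only [image_homeomorph_trans, himage₁, himage₂, himage₃, himage₄]

end Rectangle

section Grid

variable {a : ℤ → ℝ} {X Y Z : Set (ℤ × ℤ)} {i i' j j' : ℤ}

/-- `a` enumerates increasingly a bi-infinite sequence of grid lines, used in both coordinate
directions. -/
structure IsGrid (a : ℤ → ℝ) : Prop where
  strictMono : StrictMono a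
  exists_mem_Ico : ∀ x : ℝ, ∃ i, x ∈ Ico (a i) (a (i + 1))

/-- The closed grid cell with index `p`. -/
def cell (a : ℤ → ℝ) (p : ℤ × ℤ) : Set (ℝ × ℝ) :=
  Icc (a p.1) (a (p.1 + 1)) ×ˢ Icc (a p.2) (a (p.2 + 1))

/-- The union of the closed grid cells with index in `X`. -/
def cellUnion (a : ℤ → ℝ) (X : Set (ℤ × ℤ)) : Set (ℝ × ℝ) :=
  ⋃ p ∈ X, cell a p

lemma mem_cellUnion {z : ℝ × ℝ} : z ∈ cellUnion a X ↔ ∃ p ∈ X, z ∈ cell a p := by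
  simp only [cellUnion, mem_iUnion₂, exists_prop]

lemma cell_subset_cellUnion {p : ℤ × ℤ} (hp : p ∈ X) : cell a p ⊆ cellUnion a X :=
  subset_biUnion_of_mem (u := cell a) hp

lemma cellUnion_mono (h : X ⊆ Y) : cellUnion a X ⊆ cellUnion a Y :=
  biUnion_subset_biUnion_left h

lemma cellUnion_union : cellUnion a (X ∪ Y) = cellUnion a X ∪ cellUnion a Y :=
  biUnion_union X Y (cell a)

lemma cellUnion_biUnion {ι : Type*} (s : Set ι) (f : ι → Set (ℤ × ℤ)) :
    cellUnion a (⋃ p ∈ s, f p) = ⋃ p ∈ s, cellUnion a (f p) := by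
  simp only [cellUnion, biUnion_iUnion]

lemma IsGrid.of_strictMono (ha : StrictMono a) (hbot : ∀ x, ∃ i, a i ≤ x)
    (htop : ∀ x, ∃ i, x < a i) : IsGrid a := by
  refine ⟨ha, fun x => ?_⟩
  obtain ⟨j, hj⟩ := htop x
  obtain ⟨i, hi, hmax⟩ := Int.exists_greatest_of_bdd (P := fun i => a i ≤ x)
    ⟨j, fun k hk => (ha.lt_iff_lt.mp (hk.trans_lt hj)).le⟩ (hbot x)
  exact ⟨i, hi, lt_of_not_ge fun h => (lt_add_one i).not_ge (hmax _ h)⟩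

namespace IsGrid

variable (ha : IsGrid a)
include ha

lemma lt_succ (i : ℤ) : a i < a (i + 1) := ha.strictMono (lt_add_one i)

lemma mem_Ico_of_mem_Ioo {x : ℝ} {k : ℤ} (hx : x ∈ Ioo (a i) (a i'))
    (hk : x ∈ Icc (a k) (a (k + 1))) : k ∈ Ico i i' :=
  ⟨Int.lt_add_one_iff.mp (ha.strictMono.lt_iff_lt.mp (hx.1.trans_le hk.2)),
    ha.strictMono.lt_iff_lt.mp (hk.1.trans_lt hx.2)⟩

lemma exists_mem_Ico_mem_Icc {x : ℝ} (hi : i < i') (hx : x ∈ Icc (a i) (a i')) :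
    ∃ k ∈ Ico i i', x ∈ Icc (a k) (a (k + 1)) := by
  rcases hx.2.lt_or_eq with hlt | rfl
  · obtain ⟨k, hk⟩ := ha.exists_mem_Ico x
    exact ⟨k, ⟨Int.lt_add_one_iff.mp (ha.strictMono.lt_iff_lt.mp (hx.1.trans_lt hk.2)),
      ha.strictMono.lt_iff_lt.mp (hk.1.trans_lt hlt)⟩, hk.1, hk.2.le⟩
  · exact ⟨i' - 1, ⟨by lia, by lia⟩, ha.strictMono.monotone (by lia),
      ha.strictMono.monotone (by lia)⟩

lemma rectangle_subset_cellUnion (hi : i < i') (hj : j < j') (h : Ico i i' ×ˢ Ico j j' ⊆ X) :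
    Icc (a i) (a i') ×ˢ Icc (a j) (a j') ⊆ cellUnion a X := by
  rintro ⟨x, y⟩ ⟨hx, hy⟩
  obtain ⟨k, hk, hxk⟩ := ha.exists_mem_Ico_mem_Icc hi hx
  obtain ⟨l, hl, hyl⟩ := ha.exists_mem_Ico_mem_Icc hj hy
  exact cell_subset_cellUnion (h (mk_mem_prod hk hl)) ⟨hxk, hyl⟩

lemma cellUnion_rectangle (hi : i < i') (hj : j < j') :
    cellUnion a (Ico i i' ×ˢ Ico j j') = Icc (a i) (a i') ×ˢ Icc (a j) (a j') := by
  refine subset_antisymm (iUnion₂_subset fun p hp => ?_)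
    (ha.rectangle_subset_cellUnion hi hj le_rfl)
  exact prod_mono
    (Icc_subset_Icc (ha.strictMono.monotone hp.1.1) (ha.strictMono.monotone hp.1.2))
    (Icc_subset_Icc (ha.strictMono.monotone hp.2.1) (ha.strictMono.monotone hp.2.2))

lemma disjoint_cellUnion_rectangle (h : Disjoint X (Ico i i' ×ˢ Ico j j')) :
    Disjoint (cellUnion a X) (Ioo (a i) (a i') ×ˢ Ioo (a j) (a j')) := by
  refine disjoint_left.mpr fun z hz hz' => ?_
  obtain ⟨p, hp, hzp⟩ := mem_cellUnion.mp hz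
  exact h.notMem_of_mem_left hp
    ⟨ha.mem_Ico_of_mem_Ioo hz'.1 hzp.1, ha.mem_Ico_of_mem_Ioo hz'.2 hzp.2⟩

lemma isClosed_cellUnion (X : Set (ℤ × ℤ)) : IsClosed (cellUnion a X) := by
  rw [cellUnion, biUnion_eq_iUnion]
  refine LocallyFinite.isClosed_iUnion ?_ fun p => isClosed_Icc.prod isClosed_Icc
  rintro ⟨x, y⟩
  obtain ⟨i, hi⟩ := ha.exists_mem_Ico x
  obtain ⟨j, hj⟩ := ha.exists_mem_Ico y
  refine ⟨Ioo (a (i - 1)) (a (i + 1)) ×ˢ Ioo (a (j - 1)) (a (j + 1)), prod_mem_nhds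
    (Ioo_mem_nhds ((ha.strictMono (sub_one_lt i)).trans_le hi.1) hi.2)
    (Ioo_mem_nhds ((ha.strictMono (sub_one_lt j)).trans_le hj.1) hj.2), ?_⟩
  refine (((finite_Ico (i - 1) (i + 1)).prod (finite_Ico (j - 1) (j + 1))).preimage
    Subtype.val_injective.injOn).subset ?_
  rintro p ⟨z, hzp, hz⟩
  exact ⟨ha.mem_Ico_of_mem_Ioo hz.1 hzp.1, ha.mem_Ico_of_mem_Ioo hz.2 hzp.2⟩

lemma closure_interior_cell (p : ℤ × ℤ) : closure (interior (cell a p)) = cell a p := by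
  rw [cell, interior_prod_eq, interior_Icc, interior_Icc, closure_prod_eq,
    closure_Ioo (ha.lt_succ _).ne, closure_Ioo (ha.lt_succ _).ne]

lemma mem_cellUnion_iff_of_mem_interior {p : ℤ × ℤ} {z : ℝ × ℝ} (hz : z ∈ interior (cell a p)) :
    z ∈ cellUnion a X ↔ p ∈ X := by
  refine ⟨fun h => ?_, fun hp => cell_subset_cellUnion hp (interior_subset hz)⟩
  obtain ⟨q, hq, hzq⟩ := mem_cellUnion.mp h
  rw [cell, interior_prod_eq, interior_Icc, interior_Icc] at hz
  have h₁ := ha.mem_Ico_of_mem_Ioo hz.1 hzq.1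
  have h₂ := ha.mem_Ico_of_mem_Ioo hz.2 hzq.2
  simp only [mem_Ico, Int.lt_add_one_iff] at h₁ h₂
  rwa [Prod.ext (le_antisymm h₁.1 h₁.2) (le_antisymm h₂.1 h₂.2)]

lemma closure_compl_cellUnion (X : Set (ℤ × ℤ)) : closure (cellUnion a X)ᶜ = cellUnion a Xᶜ := by
  refine subset_antisymm (closure_minimal ?_ (ha.isClosed_cellUnion _)) ?_
  · rintro ⟨x, y⟩ hz
    obtain ⟨i, hi⟩ := ha.exists_mem_Ico x
    obtain ⟨j, hj⟩ := ha.exists_mem_Ico y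
    have hzp : (x, y) ∈ cell a (i, j) := ⟨⟨hi.1, hi.2.le⟩, hj.1, hj.2.le⟩
    exact cell_subset_cellUnion (X := Xᶜ) (fun hp => hz (cell_subset_cellUnion hp hzp)) hzp
  · refine iUnion₂_subset fun p hp => ?_
    rw [← ha.closure_interior_cell]
    exact closure_mono fun z hz h => hp ((ha.mem_cellUnion_iff_of_mem_interior hz).mp h)

lemma cellUnion_nonempty : (cellUnion a X).Nonempty ↔ X.Nonempty := by
  refine ⟨fun ⟨z, hz⟩ => ?_, fun ⟨p, hp⟩ => ⟨(a p.1, a p.2), ?_⟩⟩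
  · obtain ⟨p, hp, -⟩ := mem_cellUnion.mp hz
    exact ⟨p, hp⟩
  · exact cell_subset_cellUnion hp
      ⟨left_mem_Icc.mpr (ha.lt_succ _).le, left_mem_Icc.mpr (ha.lt_succ _).le⟩

lemma cellUnion_sdiff_rectangle (hi : i < i') (hj : j < j')
    (h : Ico (i - 1) (i' + 1) ×ˢ Ico (j - 1) (j' + 1) ⊆ X) :
    cellUnion a (X \ Ico i i' ×ˢ Ico j j') =
      cellUnion a X \ Ioo (a i) (a i') ×ˢ Ioo (a j) (a j') := by
  refine subset_antisymm (subset_sdiff.mpr ⟨cellUnion_mono sdiff_subset,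
    ha.disjoint_cellUnion_rectangle disjoint_sdiff_left⟩) ?_
  rintro z ⟨hz, hz'⟩
  by_cases hrect : z ∈ Icc (a i) (a i') ×ˢ Icc (a j) (a j')
  · rw [← interior_Icc, ← interior_Icc, ← interior_prod_eq, ← ha.cellUnion_rectangle hi hj,
      ← mem_compl_iff, ← closure_compl, ha.closure_compl_cellUnion] at hz'
    obtain ⟨p, hp, hzp⟩ := mem_cellUnion.mp hz'
    refine cell_subset_cellUnion (X := X \ _) ⟨h ⟨?_, ?_⟩, hp⟩ hzp
    · exact ha.mem_Ico_of_mem_Ioo (Icc_subset_Ioo (ha.strictMono (sub_one_lt i)) (ha.lt_succ i')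
        hrect.1) hzp.1
    · exact ha.mem_Ico_of_mem_Ioo (Icc_subset_Ioo (ha.strictMono (sub_one_lt j)) (ha.lt_succ j')
        hrect.2) hzp.2
  · obtain ⟨p, hp, hzp⟩ := mem_cellUnion.mp hz
    refine cell_subset_cellUnion (X := X \ _) ⟨hp, fun hp' => hrect ?_⟩ hzp
    exact (ha.cellUnion_rectangle hi hj).subset (cell_subset_cellUnion hp' hzp)

/- Only finitely many gaps are involved, so a small margin fits into all of them. -/
lemma exists_margin (i i' j j' : ℤ) : ∃ δ > 0,
    Icc (a i - δ) (a i' + δ) ⊆ Ioo (a (i - 1)) (a (i' + 1)) ∧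
    Icc (a j - δ) (a j' + δ) ⊆ Ioo (a (j - 1)) (a (j' + 1)) := by
  have hlt (k : ℤ) : a (k - 1) < a k := ha.strictMono (sub_one_lt k)
  have hgap {u v : ℝ} (h : u < v) : ∀ᶠ δ in 𝓝[>] (0 : ℝ), δ < v - u :=
    mem_of_superset (Ioo_mem_nhdsGT (sub_pos.mpr h)) fun δ hδ => hδ.2
  obtain ⟨δ, hδ, ⟨h₁, h₂⟩, h₃, h₄⟩ := (eventually_mem_nhdsWithin.and
    (((hgap (hlt i)).and (hgap (ha.lt_succ i'))).and
      ((hgap (hlt j)).and (hgap (ha.lt_succ j'))))).exists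
  exact ⟨δ, hδ, Icc_subset_Ioo (by linarith) (by linarith),
    Icc_subset_Ioo (by linarith) (by linarith)⟩

end IsGrid

/-- Some generically affine homeomorphism of the plane maps the cell union of `X` onto that of
`Y`. -/
def CellUnionEquiv (a : ℤ → ℝ) (X Y : Set (ℤ × ℤ)) : Prop :=
  ∃ Φ : ℝ × ℝ ≃ₜ ℝ × ℝ, GenericallyAffine Φ ∧ Φ '' cellUnion a X = cellUnion a Y

namespace CellUnionEquiv

lemma refl (a : ℤ → ℝ) (X : Set (ℤ × ℤ)) : CellUnionEquiv a X X :=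
  ⟨.refl _, .of_affine (.id ℝ _), image_id _⟩

lemma trans (h : CellUnionEquiv a X Y) (h' : CellUnionEquiv a Y Z) : CellUnionEquiv a X Z := by
  obtain ⟨Φ, hΦ, hXY⟩ := h
  obtain ⟨Ψ, hΨ, hYZ⟩ := h'
  exact ⟨Φ.trans Ψ, hΨ.comp_homeomorph hΦ, by rw [image_homeomorph_trans, hXY, hYZ]⟩

lemma compl (h : CellUnionEquiv a X Y) (ha : IsGrid a) : CellUnionEquiv a Xᶜ Yᶜ := by
  obtain ⟨Φ, hΦ, hXY⟩ := h
  refine ⟨Φ, hΦ, ?_⟩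
  rw [← ha.closure_compl_cellUnion, ← ha.closure_compl_cellUnion, Φ.image_closure,
    image_compl_eq Φ.bijective, hXY]

end CellUnionEquiv

/-- The vertical stack of cells with horizontal index `i` and vertical index in `[b, t)`. -/
def column (i b t : ℤ) : Set (ℤ × ℤ) :=
  Ico i (i + 1) ×ˢ Ico b t

lemma mem_column {i b t : ℤ} {p : ℤ × ℤ} : p ∈ column i b t ↔ p.1 = i ∧ p.2 ∈ Ico b t := by
  rw [column, mem_prod, mem_Ico, Int.lt_add_one_iff, ← le_antisymm_iff, eq_comm]

section Peel

variable {b t : ℤ} (ha : IsGrid a) (hbt : b < t)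
include ha hbt

lemma cellUnionEquiv_union_column_east
    (hwhite : Disjoint X (Ico (i - 1) (i + 1) ×ˢ Ico (b - 1) (t + 1)))
    (hblack : column (i + 1) b t ⊆ X) : CellUnionEquiv a (X ∪ column i b t) X := by
  obtain ⟨δ, hδ, hδx, hδy⟩ := ha.exists_margin i (i + 1) b t
  obtain ⟨Φ, hΦ, -, habs⟩ :=
    isAbsorbable_rectangle_east (ha.lt_succ i) (ha.strictMono hbt) hδ
  refine ⟨Φ, hΦ, ?_⟩
  rw [cellUnion_union, column, ha.cellUnion_rectangle (lt_add_one i) hbt]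
  refine habs _ ((ha.disjoint_cellUnion_rectangle hwhite).mono_right (prod_mono ?_ hδy)) ?_
  · exact fun x hx => ⟨(hδx ⟨hx.1, by linarith [hx.2]⟩).1, hx.2⟩
  · refine subset_trans (prod_mono (Icc_subset_Icc le_rfl ?_) le_rfl)
      (ha.rectangle_subset_cellUnion (lt_add_one (i + 1)) hbt hblack)
    exact (hδx (right_mem_Icc.mpr (by linarith [ha.lt_succ i]))).2.le

lemma cellUnionEquiv_union_column_north
    (hwhite : Disjoint X (Ico (i - 1) (i + 2) ×ˢ Ico (b - 1) t)) (hblack : (i, t) ∈ X) :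
    CellUnionEquiv a (X ∪ column i b t) X := by
  obtain ⟨δ, hδ, hδx, hδy⟩ := ha.exists_margin i (i + 1) b t
  obtain ⟨Φ, hΦ, -, habs⟩ :=
    isAbsorbable_rectangle_north (ha.lt_succ i) (ha.strictMono hbt) hδ
  refine ⟨Φ, hΦ, ?_⟩
  rw [cellUnion_union, column, ha.cellUnion_rectangle (lt_add_one i) hbt]
  rw [show i + 2 = i + 1 + 1 by ring] at hwhite
  refine habs _ ((ha.disjoint_cellUnion_rectangle hwhite).mono_right (prod_mono hδx ?_)) ?_
  · exact fun y hy => ⟨(hδy ⟨hy.1, by linarith [hy.2]⟩).1, hy.2⟩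
  · refine subset_trans (prod_mono le_rfl (Icc_subset_Icc le_rfl ?_))
      (cell_subset_cellUnion hblack)
    exact (hδy (right_mem_Icc.mpr (by linarith [ha.strictMono hbt]))).2.le

lemma cellUnionEquiv_union_column_south
    (hwhite : Disjoint X (Ico (i - 1) (i + 2) ×ˢ Ico b (t + 1))) (hblack : (i, b - 1) ∈ X) :
    CellUnionEquiv a (X ∪ column i b t) X := by
  obtain ⟨δ, hδ, hδx, hδy⟩ := ha.exists_margin i (i + 1) b t
  obtain ⟨Φ, hΦ, -, habs⟩ :=
    isAbsorbable_rectangle_south (ha.lt_succ i) (ha.strictMono hbt) hδ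
  refine ⟨Φ, hΦ, ?_⟩
  rw [cellUnion_union, column, ha.cellUnion_rectangle (lt_add_one i) hbt]
  rw [show i + 2 = i + 1 + 1 by ring] at hwhite
  refine habs _ ((ha.disjoint_cellUnion_rectangle hwhite).mono_right (prod_mono hδx ?_)) ?_
  · exact fun y hy => ⟨hy.1, (hδy ⟨by linarith [hy.1], hy.2⟩).2⟩
  · refine subset_trans (prod_mono le_rfl (Icc_subset_Icc ?_ ?_)) (cell_subset_cellUnion hblack)
    · exact (hδy (left_mem_Icc.mpr (by linarith [ha.strictMono hbt]))).1.le
    · simp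

end Peel

end Grid

section Runs

variable {a : ℤ → ℝ} {S X : Set (ℤ × ℤ)} {i b t : ℤ}

/-- No `2 × 2` block of cells meets `X` in exactly one of its diagonals; digital topology calls
such sets well-composed. -/
def IsWellComposed (X : Set (ℤ × ℤ)) : Prop := ∀ k l : ℤ,
  ¬((k, l) ∈ X ∧ (k + 1, l + 1) ∈ X ∧ (k + 1, l) ∉ X ∧ (k, l + 1) ∉ X) ∧
  ¬((k + 1, l) ∈ X ∧ (k, l + 1) ∈ X ∧ (k, l) ∉ X ∧ (k + 1, l + 1) ∉ X)

lemma IsWellComposed.compl (hX : IsWellComposed X) : IsWellComposed Xᶜ := by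
  intro k l
  have := hX k l
  simp only [mem_compl_iff, not_not]
  tauto

/-- `column i b t` is a maximal vertical stack of cells of `X`. -/
structure IsRun (X : Set (ℤ × ℤ)) (i b t : ℤ) : Prop where
  lt : b < t
  mem : ∀ j ∈ Ico b t, (i, j) ∈ X
  bot_notMem : (i, b - 1) ∉ X
  top_notMem : (i, t) ∉ X

/-- A run that has no cell of `X` on its left. -/
structure IsExposedRun (X : Set (ℤ × ℤ)) (i b t : ℤ) : Prop extends IsRun X i b t where
  left_notMem : ∀ j ∈ Ico b t, (i - 1, j) ∉ X

/-- The heights at which the stack `column i b t` touches a cell of `X` on its right. -/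
def rightContact (X : Set (ℤ × ℤ)) (i b t : ℤ) : Set ℤ :=
  {j ∈ Ico b t | (i + 1, j) ∈ X}

lemma exists_isRun {u j v : ℤ} (huj : u < j) (hjv : j < v) (hj : (i, j) ∈ X) (hu : (i, u) ∉ X)
    (hv : (i, v) ∉ X) : ∃ b t, IsRun X i b t ∧ u < b ∧ t ≤ v := by
  obtain ⟨b, ⟨hbj, hb⟩, hb'⟩ := Int.exists_greatest_of_bdd
    (P := fun k => k < j ∧ (i, k) ∉ X) ⟨j, fun k hk => hk.1.le⟩ ⟨u, huj, hu⟩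
  obtain ⟨t, ⟨hjt, ht⟩, ht'⟩ := Int.exists_least_of_bdd
    (P := fun k => j < k ∧ (i, k) ∉ X) ⟨j, fun k hk => hk.1.le⟩ ⟨v, hjv, hv⟩
  refine ⟨b + 1, t, ⟨by lia, fun k hk => ?_, by simpa using hb, ht⟩,
    Int.lt_add_one_iff.mpr (hb' u ⟨huj, hu⟩), ht' v ⟨hjv, hv⟩⟩
  by_contra hkX
  rcases lt_trichotomy k j with hkj | rfl | hkj
  · exact hk.1.not_gt (Int.lt_add_one_iff.mpr (hb' k ⟨hkj, hkX⟩))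
  · exact hkX hj
  · exact hk.2.not_ge (ht' k ⟨hkj, hkX⟩)

lemma exists_isExposedRun (hS : S.Finite) (hne : S.Nonempty) : ∃ i b t, IsExposedRun S i b t := by
  obtain ⟨⟨i, j⟩, hij, hleft⟩ := exists_min_image S Prod.fst hS hne
  have hcol : (insert j ((i, ·) ⁻¹' S)).Finite :=
    (hS.preimage (Prod.mk_right_injective i).injOn).insert j
  obtain ⟨u, hu⟩ := hcol.bddBelow
  obtain ⟨v, hv⟩ := hcol.bddAbove
  have huj := hu (mem_insert j _)
  have hjv := hv (mem_insert j _)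
  obtain ⟨b, t, hrun, -, -⟩ := exists_isRun (u := u - 1) (v := v + 1) (by lia) (by lia) hij
    (fun h => (sub_one_lt u).not_ge (hu (mem_insert_of_mem _ h)))
    (fun h => (lt_add_one v).not_ge (hv (mem_insert_of_mem _ h)))
  exact ⟨i, b, t, hrun, fun k _ hk => (sub_one_lt i).not_ge (hleft _ hk)⟩

lemma IsExposedRun.exists_compl_of_not_ordConnected (h : IsExposedRun X i b t)
    (hcontact : ¬OrdConnected (rightContact X i b t)) :
    ∃ b' t', IsExposedRun Xᶜ (i + 1) b' t' := by
  simp only [ordConnected_def, not_forall, not_subset] at hcontact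
  obtain ⟨u, hu, v, hv, j, hj, hjX⟩ := hcontact
  have hj' : (i + 1, j) ∉ X := fun hm => hjX ⟨⟨hu.1.1.trans hj.1, hj.2.trans_lt hv.1.2⟩, hm⟩
  have huj : u < j := hj.1.lt_of_ne (by rintro rfl; exact hj' hu.2)
  have hjv : j < v := hj.2.lt_of_ne (by rintro rfl; exact hj' hv.2)
  obtain ⟨b', t', hrun, hb', ht'⟩ :=
    exists_isRun (X := Xᶜ) huj hjv hj' (not_not_intro hu.2) (not_not_intro hv.2)
  refine ⟨b', t', hrun, fun k hk => not_not_intro ?_⟩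
  rw [add_sub_cancel_right]
  exact h.mem k ⟨hu.1.1.trans (hb'.le.trans hk.1), hk.2.trans (ht'.trans_lt hv.1.2)⟩

/- A gap in the contact set of an exposed run contains an exposed run of the other colour in the
next column, so an exposed run in the last possible column has no gap. -/
lemma exists_isExposedRun_ordConnected (hS : S.Finite) (hne : S.Nonempty) :
    ∃ X i b t, (X = S ∨ X = Sᶜ) ∧ IsExposedRun X i b t ∧ OrdConnected (rightContact X i b t) := by
  let P (i : ℤ) : Prop := ∃ X b t, (X = S ∨ X = Sᶜ) ∧ IsExposedRun X i b t
  have hP : ∃ i, P i := by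
    obtain ⟨i, b, t, hrun⟩ := exists_isExposedRun hS hne
    exact ⟨i, S, b, t, Or.inl rfl, hrun⟩
  have hbdd : ∃ m, ∀ i, P i → i ≤ m := by
    obtain ⟨m, hm⟩ := (hS.image Prod.fst).bddAbove
    refine ⟨m, ?_⟩
    rintro i ⟨X, b, t, rfl | rfl, hrun⟩
    · exact hm (mem_image_of_mem Prod.fst (hrun.mem b (left_mem_Ico.mpr hrun.lt)))
    · exact hm (mem_image_of_mem Prod.fst (not_not.mp hrun.top_notMem))
  obtain ⟨i, ⟨X, b, t, hX, hrun⟩, hmax⟩ := Int.exists_greatest_of_bdd hbdd hP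
  refine ⟨X, i, b, t, hX, hrun, ?_⟩
  by_contra hcontact
  obtain ⟨b', t', hrun'⟩ := hrun.exists_compl_of_not_ordConnected hcontact
  have hX' : Xᶜ = S ∨ Xᶜ = Sᶜ := by
    rw [compl_eq_comm, compl_inj_iff]
    exact hX.symm.imp_left Eq.symm
  exact (lt_add_one i).not_ge (hmax _ ⟨Xᶜ, b', t', hX', hrun'⟩)

lemma exists_eq_Ico_of_ordConnected {s : Set ℤ} (hs : OrdConnected s) (hne : s.Nonempty)
    (hsub : s ⊆ Ico b t) : ∃ c d, b ≤ c ∧ c < d ∧ d ≤ t ∧ s = Ico c d := by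
  obtain ⟨c, hc, hc'⟩ := Int.exists_least_of_bdd (P := (· ∈ s)) ⟨b, fun k hk => (hsub hk).1⟩ hne
  obtain ⟨d, hd, hd'⟩ := Int.exists_greatest_of_bdd (P := (· ∈ s))
    ⟨t, fun k hk => (hsub hk).2.le⟩ hne
  refine ⟨c, d + 1, (hsub hc).1, Int.lt_add_one_iff.mpr (hc' d hd), (hsub hd).2, ?_⟩
  exact subset_antisymm (fun k hk => ⟨hc' k hk, Int.lt_add_one_iff.mpr (hd' k hk)⟩)
    fun k hk => hs.out hc hd ⟨hk.1, Int.lt_add_one_iff.mp hk.2⟩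

lemma IsRun.column_subset (h : IsRun X i b t) : column i b t ⊆ X := by
  rintro ⟨k, l⟩ hkl
  obtain ⟨rfl, hl⟩ := mem_column.mp hkl
  exact h.mem l hl

lemma IsRun.isWellComposed_sdiff (h : IsRun X i b t) (hX : IsWellComposed X) :
    IsWellComposed (X \ column i b t) := by
  have hup : ∀ k l, (k, l) ∈ column i b t → (k, l + 1) ∈ X → (k, l + 1) ∈ column i b t := by
    simp only [mem_column, mem_Ico]
    rintro k l ⟨rfl, hl⟩ hmem
    refine ⟨rfl, by lia, lt_of_le_of_ne (by lia) ?_⟩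
    rintro rfl
    exact h.top_notMem hmem
  have hdown : ∀ k l, (k, l + 1) ∈ column i b t → (k, l) ∈ X → (k, l) ∈ column i b t := by
    simp only [mem_column, mem_Ico]
    rintro k l ⟨rfl, hl⟩ hmem
    refine ⟨rfl, ?_, by lia⟩
    by_contra hlt
    obtain rfl : l = b - 1 := by lia
    exact h.bot_notMem hmem
  intro k l
  have := hX k l
  have := hup k l
  have := hup (k + 1) l
  have := hdown k l
  have := hdown (k + 1) l
  simp only [Set.mem_sdiff]
  grind

lemma IsExposedRun.left_notMem_Icc (h : IsExposedRun X i b t) (hX : IsWellComposed X) {j : ℤ}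
    (hj : j ∈ Icc (b - 1) t) : (i - 1, j) ∉ X := by
  obtain ⟨hlt, hbj, hjt⟩ := And.intro h.lt hj
  intro hmem
  rcases (by lia : j = b - 1 ∨ j = t ∨ (b ≤ j ∧ j < t)) with rfl | rfl | hj'
  · have hblock := (hX (i - 1) (b - 1)).1
    simp only [sub_add_cancel] at hblock
    exact hblock ⟨hmem, h.mem b ⟨le_rfl, hlt⟩, h.bot_notMem, h.left_notMem b ⟨le_rfl, hlt⟩⟩
  · have hblock := (hX (i - 1) (j - 1)).2
    simp only [sub_add_cancel] at hblock
    exact hblock ⟨h.mem _ ⟨by lia, by lia⟩, hmem, h.left_notMem _ ⟨by lia, by lia⟩, h.top_notMem⟩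
  · exact h.left_notMem j hj' hmem

lemma IsRun.topRight_notMem (h : IsRun X i b t) (hX : IsWellComposed X)
    (hr : (i + 1, t - 1) ∉ X) : (i + 1, t) ∉ X := by
  have hlt := h.lt
  intro hmem
  have hblock := (hX i (t - 1)).1
  simp only [sub_add_cancel] at hblock
  exact hblock ⟨h.mem _ ⟨by lia, by lia⟩, hmem, hr, h.top_notMem⟩

lemma IsRun.bottomRight_notMem (h : IsRun X i b t) (hX : IsWellComposed X)
    (hr : (i + 1, b) ∉ X) : (i + 1, b - 1) ∉ X := by
  intro hmem
  have hblock := (hX i (b - 1)).2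
  simp only [sub_add_cancel] at hblock
  exact hblock ⟨hmem, h.mem b ⟨le_rfl, h.lt⟩, h.bot_notMem, hr⟩

/- The parts of the column above and below the contact are absorbed vertically into the middle
part, which is then absorbed to the right. -/
lemma cellUnionEquiv_union_column_of_contact (ha : IsGrid a) {c d : ℤ} (hbc : b ≤ c) (hcd : c < d)
    (hdt : d ≤ t) (hleft : ∀ k ∈ Icc (i - 1) i, ∀ l ∈ Icc (b - 1) t, (k, l) ∉ X)
    (hright : rightContact X i b t = Ico c d) (htop : d < t → (i + 1, t) ∉ X)
    (hbot : b < c → (i + 1, b - 1) ∉ X) : CellUnionEquiv a (X ∪ column i b t) X := by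
  have hmem (l : ℤ) (hl : l ∈ Ico b t) : (i + 1, l) ∈ X ↔ l ∈ Ico c d := by
    rw [← hright, rightContact, mem_ofPred_eq, and_iff_right hl]
  have habove : CellUnionEquiv a (X ∪ column i b t) (X ∪ column i b d) := by
    rcases hdt.eq_or_lt with rfl | hdt
    · exact .refl a _
    rw [show X ∪ column i b t = X ∪ column i b d ∪ column i d t by
      ext; simp only [mem_union, mem_column, mem_Ico]; lia]
    refine cellUnionEquiv_union_column_south ha hdt (disjoint_right.mpr ?_)
      (.inr (mem_column.mpr ⟨rfl, by simp only [mem_Ico]; lia⟩))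
    rintro ⟨k, l⟩ ⟨hk, hl⟩
    simp only [mem_union, mem_column, mem_Ico, mem_Icc] at *
    grind
  have hbelow : CellUnionEquiv a (X ∪ column i b d) (X ∪ column i c d) := by
    rcases hbc.eq_or_lt with rfl | hbc
    · exact .refl a _
    rw [show X ∪ column i b d = X ∪ column i c d ∪ column i b c by
      ext; simp only [mem_union, mem_column, mem_Ico]; lia]
    refine cellUnionEquiv_union_column_north ha hbc (disjoint_right.mpr ?_)
      (.inr (mem_column.mpr ⟨rfl, left_mem_Ico.mpr hcd⟩))
    rintro ⟨k, l⟩ ⟨hk, hl⟩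
    simp only [mem_union, mem_column, mem_Ico, mem_Icc] at *
    grind
  have hmiddle : CellUnionEquiv a (X ∪ column i c d) X := by
    refine cellUnionEquiv_union_column_east ha hcd (disjoint_right.mpr ?_) ?_
    · rintro ⟨k, l⟩ ⟨hk, hl⟩
      simp only [mem_Ico] at hk hl
      exact hleft k ⟨hk.1, by lia⟩ l ⟨by lia, by lia⟩
    · rintro ⟨k, l⟩ hkl
      obtain ⟨rfl, hl⟩ := mem_column.mp hkl
      exact (hmem l ⟨hbc.trans hl.1, hl.2.trans_le hdt⟩).mpr hl
  exact habove.trans (hbelow.trans hmiddle)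

lemma IsRun.notMem_sdiff (h : IsRun X i b t) {j : ℤ} (hj : j ∈ Icc (b - 1) t) :
    (i, j) ∉ X \ column i b t := by
  rintro ⟨hmem, hcol⟩
  rw [mem_column, mem_Ico] at hcol
  obtain ⟨hbj, hjt⟩ := hj
  rcases (by lia : j = b - 1 ∨ j = t) with rfl | rfl
  · exact h.bot_notMem hmem
  · exact h.top_notMem hmem

lemma IsExposedRun.cellUnionEquiv_sdiff (h : IsExposedRun X i b t) (ha : IsGrid a)
    (hX : IsWellComposed X) (hcontact : OrdConnected (rightContact X i b t))
    (hne : (rightContact X i b t).Nonempty) : CellUnionEquiv a X (X \ column i b t) := by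
  obtain ⟨c, d, hbc, hcd, hdt, hcontact⟩ :=
    exists_eq_Ico_of_ordConnected hcontact hne (sep_subset _ _)
  have hmem (l : ℤ) (hl : l ∈ Ico b t) : (i + 1, l) ∈ X ↔ l ∈ Ico c d := by
    rw [← hcontact, rightContact, mem_ofPred_eq, and_iff_right hl]
  have hright : rightContact (X \ column i b t) i b t = Ico c d := by
    rw [← hcontact]
    ext l
    simp [rightContact, mem_column]
  have hleft : ∀ k ∈ Icc (i - 1) i, ∀ l ∈ Icc (b - 1) t, (k, l) ∉ X \ column i b t := by
    rintro k ⟨hk, hki⟩ l hl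
    rcases (by lia : k = i - 1 ∨ k = i) with rfl | rfl
    · exact fun hm => h.left_notMem_Icc hX hl hm.1
    · exact h.notMem_sdiff hl
  have htop : d < t → (i + 1, t - 1) ∉ X := fun hdt hm =>
    ((hmem _ ⟨by lia, by lia⟩).mp hm).2.not_ge (by lia)
  have hbot : b < c → (i + 1, b) ∉ X := fun hbc hm =>
    ((hmem _ ⟨le_rfl, h.lt⟩).mp hm).1.not_gt hbc
  have := cellUnionEquiv_union_column_of_contact ha hbc hcd hdt hleft hright
    (fun hdt hm => h.topRight_notMem hX (htop hdt) hm.1)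
    (fun hbc hm => h.bottomRight_notMem hX (hbot hbc) hm.1)
  rwa [sdiff_union_of_subset h.column_subset] at this

/- Well-composedness excludes the four corners of the ring around the run. -/
lemma IsExposedRun.disjoint_ring (h : IsExposedRun X i b t) (hX : IsWellComposed X)
    (hright : rightContact X i b t = ∅) :
    Disjoint (X \ column i b t) (Ico (i - 1) (i + 2) ×ˢ Ico (b - 1) (t + 1)) := by
  have hright' : ∀ j ∈ Ico b t, (i + 1, j) ∉ X := fun j hj hm =>
    hright.subset (show j ∈ rightContact X i b t from ⟨hj, hm⟩)
  rw [disjoint_right]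
  rintro ⟨k, l⟩ ⟨⟨hk, hk'⟩, hl, hl'⟩ hm
  have hlt := h.lt
  simp only at hk hk' hl hl'
  rcases (by lia : k = i - 1 ∨ k = i ∨ k = i + 1) with rfl | rfl | rfl
  · exact h.left_notMem_Icc hX ⟨hl, by lia⟩ hm.1
  · exact h.notMem_sdiff ⟨hl, by lia⟩ hm
  · rcases (by lia : l = b - 1 ∨ l = t ∨ b ≤ l ∧ l < t) with rfl | rfl | hl
    · exact h.bottomRight_notMem hX (hright' b ⟨le_rfl, hlt⟩) hm.1
    · exact h.topRight_notMem hX (hright' (l - 1) ⟨by lia, by lia⟩) hm.1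
    · exact hright' l hl hm.1

lemma IsExposedRun.eq_column_of_isPreconnected (h : IsExposedRun X i b t) (ha : IsGrid a)
    (hX : IsWellComposed X) (hright : rightContact X i b t = ∅)
    (hconn : IsPreconnected (cellUnion a X)) : X = column i b t := by
  have hdisj : Disjoint (cellUnion a (column i b t)) (cellUnion a (X \ column i b t)) := by
    refine ((ha.disjoint_cellUnion_rectangle (h.disjoint_ring hX hright)).mono_right ?_).symm
    rw [column, ha.cellUnion_rectangle (lt_add_one i) h.lt]
    exact prod_mono (Icc_subset_Ioo (ha.strictMono (by lia)) (ha.strictMono (by lia)))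
      (Icc_subset_Ioo (ha.strictMono (by lia)) (ha.strictMono (by lia)))
  have hunion : cellUnion a X = cellUnion a (column i b t) ∪ cellUnion a (X \ column i b t) := by
    rw [← cellUnion_union, union_sdiff_cancel h.column_subset]
  have hcol : (cellUnion a (column i b t)).Nonempty :=
    ha.cellUnion_nonempty.mpr ⟨(i, b), mem_column.mpr ⟨rfl, left_mem_Ico.mpr h.lt⟩⟩
  rcases (isPreconnected_iff_subset_of_fully_disjoint_closed (ha.isClosed_cellUnion X)).mp hconn
    _ _ (ha.isClosed_cellUnion _) (ha.isClosed_cellUnion _) hunion.subset hdisj with hsub | hsub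
  · refine subset_antisymm (sdiff_eq_empty.mp ?_) h.column_subset
    by_contra hne
    refine (ha.cellUnion_nonempty.mpr (nonempty_iff_ne_empty.mpr hne)).not_subset_empty ?_
    exact hdisj ((subset_union_right.trans hunion.superset).trans hsub) le_rfl
  · exact absurd (hdisj le_rfl ((subset_union_left.trans hunion.superset).trans hsub))
      hcol.not_subset_empty

/-- The cells of `S` whose upper neighbour is not in `S`; their number decreases whenever a run is
removed or filled. -/
def topCells (S : Set (ℤ × ℤ)) : Set (ℤ × ℤ) :=
  {p ∈ S | (p.1, p.2 + 1) ∉ S}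

lemma IsRun.ncard_topCells_sdiff_lt (h : IsRun S i b t) (hS : S.Finite) :
    (topCells (S \ column i b t)).ncard < (topCells S).ncard := by
  have hlt := h.lt
  refine ncard_lt_ncard ?_ (hS.subset (sep_subset _ _))
  refine (ssubset_iff_of_subset ?_).mpr ⟨(i, t - 1), ⟨h.mem _ ⟨by lia, by lia⟩, ?_⟩, ?_⟩
  · rintro ⟨k, l⟩ ⟨⟨hm, hcol⟩, htop⟩
    refine ⟨hm, fun hm' => htop ⟨hm', fun hcol' => ?_⟩⟩
    simp only [mem_column, mem_Ico] at hcol hcol'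
    obtain ⟨rfl, hl⟩ := hcol'
    obtain rfl : l = b - 1 := by lia
    exact h.bot_notMem hm
  · simpa using h.top_notMem
  · exact fun hm => hm.1.2 (mem_column.mpr ⟨rfl, by simpa using hlt⟩)

lemma IsRun.ncard_topCells_union_lt (h : IsRun Sᶜ i b t) (hS : S.Finite) :
    (topCells (S ∪ column i b t)).ncard < (topCells S).ncard := by
  refine ncard_lt_ncard ?_ (hS.subset (sep_subset _ _))
  refine (ssubset_iff_of_subset ?_).mpr ⟨(i, b - 1), ⟨not_not.mp h.bot_notMem, ?_⟩, ?_⟩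
  · rintro ⟨k, l⟩ ⟨hm | hcol, htop⟩
    · exact ⟨hm, fun hm' => htop (.inl hm')⟩
    · rw [mem_column] at hcol
      obtain ⟨rfl, hbl, hlt⟩ := hcol
      refine absurd ?_ htop
      rcases (Int.add_one_le_iff.mpr hlt).lt_or_eq with hlt | rfl
      · exact .inr (mem_column.mpr ⟨rfl, by lia, hlt⟩)
      · exact .inl (not_not.mp h.top_notMem)
  · simpa using h.mem b (left_mem_Ico.mpr h.lt)
  · exact fun hm => hm.2 (.inr (mem_column.mpr ⟨rfl, by simpa using h.lt⟩))

end Runs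

section BallWithHoles

variable {E : Type*} [NormedAddCommGroup E] [NormedSpace ℝ E]

/-- `D` is the closed unit ball with finitely many open affine copies of the unit ball cut out,
whose closures are pairwise disjoint and contained in the open unit ball. -/
def IsBallWithHoles (D : Set E) : Prop :=
  ∃ (ι : Type) (_ : Finite ι) (e : ι → E ≃ᴬ[ℝ] E), (∀ i, e i '' closedBall 0 1 ⊆ ball 0 1) ∧
    (Pairwise fun i j => Disjoint (e i '' closedBall 0 1) (e j '' closedBall 0 1)) ∧
    D = closedBall 0 1 \ ⋃ i, e i '' ball 0 1

lemma isBallWithHoles_closedBall : IsBallWithHoles (closedBall (0 : E) 1) :=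
  ⟨Empty, inferInstance, fun i => i.elim, fun i => i.elim, fun i => i.elim, by simp⟩

lemma IsBallWithHoles.sdiff_image_ball {D : Set E} (hD : IsBallWithHoles D) {e : E ≃ᴬ[ℝ] E}
    (he : e '' closedBall 0 1 ⊆ interior D) : IsBallWithHoles (D \ e '' ball 0 1) := by
  obtain ⟨ι, _, f, hf, hdisj, rfl⟩ := hD
  have hdisj' (i : ι) : Disjoint (e '' closedBall 0 1) (f i '' closedBall 0 1) := by
    have hclosure : f i '' closedBall 0 1 = closure (f i '' ball 0 1) := by
      rw [← closure_ball (0 : E) one_ne_zero]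
      exact (f i).toHomeomorph.image_closure _
    rw [hclosure]
    refine (Disjoint.closure_right ?_ isOpen_interior).mono_left he
    exact (disjoint_sdiff_left.mono_right (subset_iUnion (fun i => f i '' ball 0 1) i)).mono_left
      interior_subset
  refine ⟨Option ι, inferInstance, fun o => o.elim e f, ?_, ?_, ?_⟩
  · rintro (_ | i)
    · refine he.trans ?_
      rw [← interior_closedBall (0 : E) one_ne_zero]
      exact interior_mono sdiff_subset
    · exact hf i
  · rintro (_ | i) (_ | j) hij
    · exact absurd rfl hij
    · exact hdisj' j
    · exact (hdisj' i).symm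
    · exact hdisj (fun h => hij (congrArg some h))
  · rw [iUnion_option, Set.sdiff_sdiff, union_comm]
    rfl

lemma exists_continuousAffineEquiv_image_ball (p : E) {r : ℝ} (hr : 0 < r) : ∃ e : E ≃ᴬ[ℝ] E,
    e '' closedBall 0 1 = closedBall p r ∧ e '' ball 0 1 = ball p r := by
  refine ⟨(ContinuousLinearEquiv.smulLeft (Units.mk0 r hr.ne')).toContinuousAffineEquiv.trans
    (.constVAdd ℝ E p), ?_, ?_⟩
  · rw [← affinity_unitClosedBall hr.le, ContinuousAffineEquiv.coe_trans, image_comp]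
    rfl
  · rw [← affinity_unitBall hr, ContinuousAffineEquiv.coe_trans, image_comp]
    rfl

lemma IsBallWithHoles.image_sdiff_ball {A : Set E} {Φ : E ≃ₜ E} (hD : IsBallWithHoles (Φ '' A))
    {e : E ≃ᴬ[ℝ] E} {p : E} {r : ℝ} (hr : 0 < r)
    (hp : closedBall p r ⊆ interior A) (he : EqOn Φ e (closedBall p r)) :
    IsBallWithHoles (Φ '' (A \ ball p r)) := by
  obtain ⟨f, hf, hf'⟩ := exists_continuousAffineEquiv_image_ball p hr
  have hclosedBall : f.trans e '' closedBall 0 1 = Φ '' closedBall p r := by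
    rw [ContinuousAffineEquiv.coe_trans, image_comp, hf, he.image_eq]
  have hball : f.trans e '' ball 0 1 = Φ '' ball p r := by
    rw [ContinuousAffineEquiv.coe_trans, image_comp, hf',
      (he.mono ball_subset_closedBall).image_eq]
  rw [image_sdiff Φ.injective, ← hball]
  refine hD.sdiff_image_ball ?_
  rw [hclosedBall, ← Φ.image_interior]
  exact image_mono hp

lemma LocallyAffineAt.exists_continuousAffineEquiv [FiniteDimensional ℝ E] {f : E → E} {x : E}
    (h : LocallyAffineAt f x) (hf : f.Injective) : ∃ e : E ≃ᴬ[ℝ] E, f =ᶠ[𝓝 x] e := by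
  obtain ⟨A, hA⟩ := h
  have hinj : Function.Injective A.linear := by
    rw [injective_iff_map_eq_zero]
    intro v hv
    have hcont : Continuous fun t : ℝ => x + t • v := by fun_prop
    have hline : Tendsto (fun t : ℝ => x + t • v) (𝓝[≠] 0) (𝓝 x) :=
      (hcont.tendsto' 0 x (by simp)).mono_left nhdsWithin_le_nhds
    obtain ⟨t, ht, ht0⟩ := ((hline.eventually hA).and eventually_mem_nhdsWithin).exists
    have hfixed : f (x + t • v) = f x := by
      rw [ht, hA.self_of_nhds, add_comm x]
      simpa [hv] using A.toAffineMap.map_vadd x (t • v)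
    exact (smul_eq_zero.mp (add_eq_left.mp (hf hfixed))).resolve_left ht0
  have hbij : Function.Bijective A.linear :=
    ⟨hinj, LinearMap.injective_iff_surjective.mp hinj⟩
  exact ⟨(AffineEquiv.ofBijective (A.toAffineMap.linear_bijective_iff.mp hbij)
    ).toContinuousAffineEquiv, hA⟩

end BallWithHoles

/-- Some generically affine homeomorphism of the plane maps `A` onto a square with parallelogram
holes. -/
def HasHoledSquareModel (A : Set (ℝ × ℝ)) : Prop :=
  ∃ Φ : ℝ × ℝ ≃ₜ ℝ × ℝ, GenericallyAffine Φ ∧ IsBallWithHoles (Φ '' A)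

section HoledSquare

variable {x₀ x₁ y₀ y₁ δ : ℝ}

lemma closedBall_eq_Icc_prod_Icc (p : ℝ × ℝ) (r : ℝ) :
    closedBall p r = Icc (p.1 - r) (p.1 + r) ×ˢ Icc (p.2 - r) (p.2 + r) := by
  rw [← Real.closedBall_eq_Icc, ← Real.closedBall_eq_Icc, closedBall_prod_same]

lemma hasHoledSquareModel_rectangle (hx : x₀ < x₁) (hy : y₀ < y₁) :
    HasHoledSquareModel (Icc x₀ x₁ ×ˢ Icc y₀ y₁) := by
  have hx' : 0 < (x₁ - x₀) / 2 := by linarith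
  have hy' : 0 < (y₁ - y₀) / 2 := by linarith
  let Φ := (affineHomeomorph _ ((x₀ + x₁) / 2) hx'.ne').prodCongr
    (affineHomeomorph _ ((y₀ + y₁) / 2) hy'.ne')
  refine ⟨Φ.symm, genericallyAffine_prodMap_affineHomeomorph_symm _ _ _ _ hx'.ne' hy'.ne', ?_⟩
  have himage : Φ '' closedBall 0 1 = Icc x₀ x₁ ×ˢ Icc y₀ y₁ := by
    rw [closedBall_eq_Icc_prod_Icc]
    change Prod.map (affineHomeomorph _ _ hx'.ne') (affineHomeomorph _ _ hy'.ne') '' _ = _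
    rw [prodMap_image_prod]
    simp only [affineHomeomorph_apply]
    rw [image_affine_Icc' hx', image_affine_Icc' hy']
    congr 2 <;> simp <;> ring
  rw [← himage, ← image_homeomorph_trans, Φ.self_trans_symm]
  simpa using isBallWithHoles_closedBall

lemma HasHoledSquareModel.of_cellUnionEquiv {a : ℤ → ℝ} {X Y : Set (ℤ × ℤ)}
    (hY : HasHoledSquareModel (cellUnion a Y)) (h : CellUnionEquiv a X Y) :
    HasHoledSquareModel (cellUnion a X) := by
  obtain ⟨Φ, hΦ, hXY⟩ := h
  obtain ⟨Ψ, hΨ, hD⟩ := hY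
  exact ⟨Φ.trans Ψ, hΨ.comp_homeomorph hΦ, by rwa [image_homeomorph_trans, hXY]⟩

/- A small square inside the hole lies where the homeomorphism is affine, and the hole can be
shrunk to that square beforehand. -/
lemma HasHoledSquareModel.sdiff_rectangle {A : Set (ℝ × ℝ)} (hA : HasHoledSquareModel A)
    (hx : x₀ < x₁) (hy : y₀ < y₁) (hδ : 0 < δ)
    (hsub : Icc (x₀ - δ) (x₁ + δ) ×ˢ Icc (y₀ - δ) (y₁ + δ) ⊆ A) :
    HasHoledSquareModel (A \ Ioo x₀ x₁ ×ˢ Ioo y₀ y₁) := by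
  obtain ⟨Φ, hΦ, hD⟩ := hA
  have hopen : IsOpen (Ioo x₀ x₁ ×ˢ Ioo y₀ y₁) := isOpen_Ioo.prod isOpen_Ioo
  obtain ⟨p, hp, hpΦ⟩ := hΦ.inter_open_nonempty _ hopen
    ((nonempty_Ioo.mpr hx).prod (nonempty_Ioo.mpr hy))
  obtain ⟨e, he⟩ := hpΦ.exists_continuousAffineEquiv Φ.injective
  obtain ⟨r, hr, hball⟩ := nhds_basis_closedBall.mem_iff.mp (inter_mem (hopen.mem_nhds hp) he)
  obtain ⟨hrect, he⟩ := subset_inter_iff.mp hball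
  have hnonempty : (closedBall p r).Nonempty := nonempty_closedBall.mpr hr.le
  obtain ⟨⟨hx', hx''⟩, hy', hy''⟩ :
      (x₀ < p.1 - r ∧ p.1 + r < x₁) ∧ y₀ < p.2 - r ∧ p.2 + r < y₁ := by
    rw [closedBall_eq_Icc_prod_Icc] at hrect hnonempty
    rwa [prod_subset_prod_iff' hnonempty, Icc_subset_Ioo_iff (by linarith),
      Icc_subset_Ioo_iff (by linarith)] at hrect
  obtain ⟨Θ, hΘ, hΘsupp, hΘimage⟩ := exists_homeomorph_shrink_rectangle hx' (by linarith) hx'' hy'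
    (by linarith) hy'' hδ
  have hΘA : Θ '' A = A := by
    refine compl_injective ?_
    rw [← image_compl_eq Θ.bijective]
    exact EqOn.image_eq_self fun z hz => hΘsupp z (notMem_subset hsub hz)
  have hΘhole : Θ '' (Ioo x₀ x₁ ×ˢ Ioo y₀ y₁) = ball p r := by
    rw [← interior_closedBall p hr.ne', closedBall_eq_Icc_prod_Icc, ← hΘimage, ← Θ.image_interior,
      interior_prod_eq, interior_Icc, interior_Icc]
  refine ⟨Θ.trans Φ, hΦ.comp_homeomorph hΘ, ?_⟩
  rw [image_homeomorph_trans, image_sdiff Θ.injective, hΘA, hΘhole]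
  refine hD.image_sdiff_ball hr (hrect.trans (interior_maximal (subset_trans ?_ hsub) hopen))
    he
  exact prod_mono (fun x hx => ⟨by linarith [hx.1], by linarith [hx.2]⟩)
    (fun y hy => ⟨by linarith [hy.1], by linarith [hy.2]⟩)

end HoledSquare

section Reduction

variable {a : ℤ → ℝ} {S X : Set (ℤ × ℤ)} {i b t : ℤ}

lemma compl_compl_sdiff_eq_union {α : Type*} (s t : Set α) : (sᶜ \ t)ᶜ = s ∪ t := by
  rw [Set.compl_sdiff, compl_compl, union_comm]

lemma IsExposedRun.hasHoledSquareModel_of_isPreconnected (h : IsExposedRun X i b t)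
    (ha : IsGrid a) (hX : IsWellComposed X) (hright : rightContact X i b t = ∅)
    (hconn : IsPreconnected (cellUnion a X)) : HasHoledSquareModel (cellUnion a X) := by
  rw [h.eq_column_of_isPreconnected ha hX hright hconn, column,
    ha.cellUnion_rectangle (lt_add_one i) h.lt]
  exact hasHoledSquareModel_rectangle (ha.lt_succ i) (ha.strictMono h.lt)

lemma IsRun.isPreconnected_cellUnion_union (h : IsRun Sᶜ i b t) (ha : IsGrid a)
    (hconn : IsPreconnected (cellUnion a S)) :
    IsPreconnected (cellUnion a (S ∪ column i b t)) := by
  rw [cellUnion_union, column, ha.cellUnion_rectangle (lt_add_one i) h.lt]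
  have hbelow : (a i, a b) ∈ cell a (i, b - 1) := by
    simp [cell, (ha.lt_succ i).le, ha.strictMono.monotone (sub_one_lt b).le]
  exact hconn.union (a i, a b) (cell_subset_cellUnion (not_not.mp h.bot_notMem) hbelow)
    ⟨left_mem_Icc.mpr (ha.lt_succ i).le, left_mem_Icc.mpr (ha.strictMono h.lt).le⟩
    (isPreconnected_Icc.prod isPreconnected_Icc)

lemma IsExposedRun.hasHoledSquareModel_of_union (h : IsExposedRun Sᶜ i b t) (ha : IsGrid a)
    (hS : IsWellComposed S) (hright : rightContact Sᶜ i b t = ∅)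
    (hmodel : HasHoledSquareModel (cellUnion a (S ∪ column i b t))) :
    HasHoledSquareModel (cellUnion a S) := by
  have hring : Ico (i - 1) (i + 1 + 1) ×ˢ Ico (b - 1) (t + 1) ⊆ S ∪ column i b t := by
    rw [← compl_compl_sdiff_eq_union, subset_compl_iff_disjoint_left,
      show i + 1 + 1 = i + 2 by ring]
    exact h.disjoint_ring hS.compl hright
  have hdisj : Disjoint S (column i b t) := subset_compl_iff_disjoint_left.mp h.column_subset
  rw [← hdisj.sup_sdiff_cancel_right]
  obtain ⟨δ, hδ, hδx, hδy⟩ := ha.exists_margin i (i + 1) b t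
  change HasHoledSquareModel (cellUnion a ((S ∪ column i b t) \ Ico i (i + 1) ×ˢ Ico b t))
  rw [ha.cellUnion_sdiff_rectangle (lt_add_one i) h.lt hring]
  refine hmodel.sdiff_rectangle (ha.lt_succ i) (ha.strictMono h.lt) hδ ?_
  refine (prod_mono (hδx.trans Ioo_subset_Icc_self) (hδy.trans Ioo_subset_Icc_self)).trans ?_
  exact ha.rectangle_subset_cellUnion (by lia) (by have := h.lt; lia) hring

/- Peeling off an exposed run of black or white cells whose contact is an interval removes a top
cell, so the process terminates. -/
theorem IsWellComposed.hasHoledSquareModel (ha : IsGrid a) (hfin : S.Finite) (hne : S.Nonempty)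
    (hS : IsWellComposed S) (hconn : IsPreconnected (cellUnion a S)) :
    HasHoledSquareModel (cellUnion a S) := by
  induction hn : (topCells S).ncard using Nat.strong_induction_on generalizing S with
  | _ n ih
  subst hn
  have hpeel {Y : Set (ℤ × ℤ)} (hequiv : CellUnionEquiv a S Y)
      (hlt : (topCells Y).ncard < (topCells S).ncard) (hY : Y.Finite) (hY' : IsWellComposed Y) :
      HasHoledSquareModel (cellUnion a S) := by
    refine .of_cellUnionEquiv ?_ hequiv
    obtain ⟨Φ, -, hΦ⟩ := hequiv
    have hYne : Y.Nonempty :=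
      ha.cellUnion_nonempty.mp (hΦ ▸ (ha.cellUnion_nonempty.mpr hne).image Φ)
    exact ih _ hlt hY hYne hY' (hΦ ▸ hconn.image Φ Φ.continuous.continuousOn) rfl
  obtain ⟨X, i, b, t, rfl | rfl, hrun, hcontact⟩ := exists_isExposedRun_ordConnected hfin hne
  · rcases (rightContact X i b t).eq_empty_or_nonempty with hempty | hcne
    · exact hrun.hasHoledSquareModel_of_isPreconnected ha hS hempty hconn
    · exact hpeel (hrun.cellUnionEquiv_sdiff ha hS hcontact hcne)
        (hrun.ncard_topCells_sdiff_lt hfin) (hfin.subset sdiff_subset)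
        (hrun.isWellComposed_sdiff hS)
  · have hfin' : (S ∪ column i b t).Finite :=
      hfin.union ((finite_Ico _ _).prod (finite_Ico _ _))
    have hS' : IsWellComposed (S ∪ column i b t) := by
      simpa only [compl_compl_sdiff_eq_union] using (hrun.isWellComposed_sdiff hS.compl).compl
    have hlt := hrun.ncard_topCells_union_lt hfin
    rcases (rightContact Sᶜ i b t).eq_empty_or_nonempty with hempty | hcne
    · exact hrun.hasHoledSquareModel_of_union ha hS hempty (ih _ hlt hfin'
        (hne.mono subset_union_left) hS' (hrun.isPreconnected_cellUnion_union ha hconn) rfl)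
    · have hequiv := (hrun.cellUnionEquiv_sdiff ha hS.compl hcontact hcne).compl ha
      rw [compl_compl_sdiff_eq_union, compl_compl] at hequiv
      exact hpeel hequiv hlt hfin' hS'

end Reduction

section Radial

variable {E F : Type*} [NormedAddCommGroup E] [NormedSpace ℝ E] [NormedAddCommGroup F]
  [NormedSpace ℝ F] {ρ : F → ℝ}

lemma continuous_smul_self_of_bounded {B : ℝ} (hB : ∀ y ≠ 0, |ρ y| ≤ B)
    (hρ : ∀ y ≠ 0, ContinuousAt ρ y) : Continuous fun y => ρ y • y := by
  rw [continuous_iff_continuousAt]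
  intro y
  rcases eq_or_ne y 0 with rfl | hy
  · have hlim : Tendsto (fun y : F => B * ‖y‖) (𝓝 0) (𝓝 0) :=
      Continuous.tendsto' (by fun_prop) 0 0 (by simp)
    rw [ContinuousAt, smul_zero]
    refine squeeze_zero_norm (fun y => ?_) hlim
    rcases eq_or_ne y 0 with rfl | hy
    · simp
    · rw [norm_smul, Real.norm_eq_abs]
      exact mul_le_mul_of_nonneg_right (hB y hy) (norm_nonneg y)
  · exact (hρ y hy).smul continuousAt_id

lemma injective_smul_self_of_monotone (hpos : ∀ y ≠ 0, 0 < ρ y)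
    (hmono : ∀ y, ∀ t ≥ (1 : ℝ), ρ y ≤ ρ (t • y)) : Function.Injective fun y => ρ y • y := by
  intro y z (h : ρ y • y = ρ z • z)
  have hzero {x : F} : ρ x • x = 0 ↔ x = 0 :=
    ⟨fun hx => by_contra fun hne => hne ((smul_eq_zero.mp hx).resolve_left (hpos x hne).ne'),
      fun hx => by rw [hx, smul_zero]⟩
  rcases eq_or_ne y 0 with rfl | hy
  · exact (hzero.mp (h.symm.trans (hzero.mpr rfl))).symm
  have hz : z ≠ 0 := fun hz => hy (hzero.mp (h.trans (hzero.mpr hz)))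
  wlog hle : ρ z ≤ ρ y generalizing y z
  · exact (this h.symm hz hy (le_of_not_ge hle)).symm
  have hline : z = (ρ y / ρ z) • y := by
    rw [div_eq_inv_mul, mul_smul, h, inv_smul_smul₀ (hpos z hz).ne']
  have hratio : 1 ≤ ρ y / ρ z := (one_le_div (hpos z hz)).mpr hle
  have hge : ρ y ≤ ρ z := by
    rw [hline]
    exact hmono y _ hratio
  rw [hline, hge.antisymm hle, div_self (hpos z hz).ne', one_smul]

lemma surjective_smul_self_of_le {m : ℝ} (hm : 0 < m) (hρ : ∀ y ≠ 0, m ≤ ρ y)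
    (hcont : Continuous fun y => ρ y • y) : Function.Surjective fun y => ρ y • y := by
  intro w
  rcases eq_or_ne w 0 with rfl | hw
  · exact ⟨0, smul_zero _⟩
  have hw' : 0 < ‖w‖ := norm_pos_iff.mpr hw
  have hnorm {t : ℝ} (ht : 0 < t) : ‖ρ (t • w) • t • w‖ = ρ (t • w) * t * ‖w‖ := by
    have := hm.trans_le (hρ (t • w) (smul_ne_zero ht.ne' hw))
    rw [smul_smul, norm_smul, Real.norm_of_nonneg (by positivity)]
  have hlow : ‖w‖ ≤ ‖ρ (m⁻¹ • w) • m⁻¹ • w‖ := by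
    rw [hnorm (inv_pos.mpr hm), ← div_eq_mul_inv]
    refine le_mul_of_one_le_left hw'.le ((one_le_div hm).mpr ?_)
    exact hρ _ (smul_ne_zero (inv_pos.mpr hm).ne' hw)
  have hray : Continuous fun t : ℝ => ‖ρ (t • w) • t • w‖ :=
    (hcont.comp (continuous_id.smul continuous_const)).norm
  obtain ⟨t, ht, htw⟩ := intermediate_value_Icc (inv_pos.mpr hm).le hray.continuousOn
    (show ‖w‖ ∈ Icc _ _ from ⟨by simp, hlow⟩)
  have ht0 : 0 < t := by
    refine ht.1.lt_of_ne' fun h => hw'.ne ?_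
    simpa [h] using htw
  refine ⟨t • w, ?_⟩
  change ‖ρ (t • w) • t • w‖ = ‖w‖ at htw
  rw [hnorm ht0, mul_eq_right₀ hw'.ne'] at htw
  change ρ (t • w) • t • w = w
  rw [smul_smul, htw, one_smul]

lemma exists_homeomorph_smul_self [FiniteDimensional ℝ F] {m B : ℝ} (hm : 0 < m)
    (hmρ : ∀ y ≠ 0, m ≤ ρ y) (hρB : ∀ y ≠ 0, ρ y ≤ B) (hρ : ∀ y ≠ 0, ContinuousAt ρ y)
    (hmono : ∀ y, ∀ t ≥ (1 : ℝ), ρ y ≤ ρ (t • y)) : ∃ h : F ≃ₜ F, ∀ y, h y = ρ y • y := by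
  have hpos (y : F) (hy : y ≠ 0) : 0 < ρ y := hm.trans_le (hmρ y hy)
  have hcont : Continuous fun y => ρ y • y := continuous_smul_self_of_bounded
    (fun y hy => (abs_of_pos (hpos y hy)).le.trans (hρB y hy)) hρ
  have hproper : Tendsto (fun y => ρ y • y) (cocompact F) (cocompact F) := by
    refine tendsto_cocompact_cocompact_of_norm fun r => ⟨r / m, fun y hy => ?_⟩
    rcases eq_or_ne y 0 with rfl | hy0
    · simpa [div_lt_iff₀ hm] using hy
    · rw [div_lt_iff₀' hm] at hy
      rw [norm_smul, Real.norm_of_nonneg (hpos y hy0).le]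
      exact hy.trans_le (mul_le_mul_of_nonneg_right (hmρ y hy0) (norm_nonneg y))
  exact ⟨(Equiv.ofBijective _ ⟨injective_smul_self_of_monotone hpos hmono,
    surjective_smul_self_of_le hm hmρ hcont⟩).toHomeomorphOfContinuousClosed hcont
      (isProperMap_iff_tendsto_cocompact.mpr ⟨hcont, hproper⟩).isClosedMap, fun _ => rfl⟩

lemma exists_homeomorph_interpolating_smul_self [FiniteDimensional ℝ F] {β₁ β₂ : F → ℝ}
    {s₁ s₂ m B : ℝ} (hs : s₁ < s₂) (hm : 0 < m) (hmβ : ∀ y ≠ 0, m ≤ β₁ y)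
    (hβ : ∀ y ≠ 0, β₁ y ≤ β₂ y) (hβB : ∀ y ≠ 0, β₂ y ≤ B) (h₁ : ∀ y ≠ 0, ContinuousAt β₁ y)
    (h₂ : ∀ y ≠ 0, ContinuousAt β₂ y) (hβ₁ : ∀ y, ∀ t ≠ (0 : ℝ), β₁ (t • y) = β₁ y)
    (hβ₂ : ∀ y, ∀ t ≠ (0 : ℝ), β₂ (t • y) = β₂ y) :
    ∃ (h : F ≃ₜ F) (ρ : F → ℝ), (∀ y, h y = ρ y • y) ∧ (∀ y ≠ 0, β₁ y ≤ ρ y ∧ ρ y ≤ β₂ y) ∧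
      (∀ y, ‖y‖ ≤ s₁ → ρ y = β₁ y) ∧ ∀ y, s₂ ≤ ‖y‖ → ρ y = β₂ y := by
  let θ (y : F) : ℝ := projIcc 0 1 zero_le_one ((‖y‖ - s₁) / (s₂ - s₁))
  let ρ (y : F) : ℝ := β₁ y + θ y * (β₂ y - β₁ y)
  have hs' : 0 < s₂ - s₁ := sub_pos.mpr hs
  have hθ : Continuous θ := continuous_subtype_val.comp (continuous_projIcc.comp (by fun_prop))
  have hθmem (y : F) : θ y ∈ Icc 0 1 := Subtype.coe_prop _
  have hθmono (y : F) (t : ℝ) (ht : 1 ≤ t) : θ y ≤ θ (t • y) := by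
    refine monotone_projIcc _ (div_le_div_of_nonneg_right (sub_le_sub_right ?_ s₁) hs'.le)
    rw [norm_smul, Real.norm_of_nonneg (by linarith)]
    exact le_mul_of_one_le_left (norm_nonneg y) ht
  have hρ (y : F) (hy : y ≠ 0) : β₁ y ≤ ρ y ∧ ρ y ≤ β₂ y := by
    have := hβ y hy
    obtain ⟨h0, h1⟩ := hθmem y
    constructor <;> nlinarith
  obtain ⟨h, hh⟩ := exists_homeomorph_smul_self (ρ := ρ) hm
    (fun y hy => (hmβ y hy).trans (hρ y hy).1) (fun y hy => (hρ y hy).2.trans (hβB y hy))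
    (fun y hy => (h₁ y hy).add (hθ.continuousAt.mul ((h₂ y hy).sub (h₁ y hy))))
    (fun y t ht => by
      rcases eq_or_ne y 0 with rfl | hy
      · rw [smul_zero]
      · have ht0 : t ≠ 0 := by linarith
        change β₁ y + θ y * (β₂ y - β₁ y) ≤ β₁ (t • y) + θ (t • y) * (β₂ (t • y) - β₁ (t • y))
        rw [hβ₁ y t ht0, hβ₂ y t ht0]
        gcongr
        · exact sub_nonneg.mpr (hβ y hy)
        · exact hθmono y t ht)
  refine ⟨h, ρ, hh, hρ, fun y hy => ?_, fun y hy => ?_⟩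
  · have hθ0 : θ y = 0 := congrArg Subtype.val (projIcc_of_le_left zero_le_one
      (div_nonpos_of_nonpos_of_nonneg (sub_nonpos.mpr hy) hs'.le))
    simp [ρ, hθ0]
  · have hθ1 : θ y = 1 := congrArg Subtype.val (projIcc_of_right_le zero_le_one
      ((one_le_div hs').mpr (sub_le_sub_right hy s₁)))
    simp [ρ, hθ1]

end Radial

section Rounding

variable {E F : Type*} [NormedAddCommGroup E] [NormedSpace ℝ E] [NormedAddCommGroup F]
  [NormedSpace ℝ F]

lemma exists_bounds_norm_div_norm (L : F ≃L[ℝ] E) :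
    ∃ m > 0, ∃ B > 0, (∀ y ≠ 0, m ≤ ‖y‖ / ‖L y‖) ∧ ∀ y, ‖y‖ / ‖L y‖ ≤ B := by
  have hK : 0 < ‖(L : F →L[ℝ] E)‖ + 1 := by positivity
  refine ⟨_, inv_pos.mpr hK, ‖(L.symm : E →L[ℝ] F)‖ + 1, by positivity, fun y hy => ?_,
    fun y => div_le_of_le_mul₀ (norm_nonneg _) (by positivity) ?_⟩
  · have hle : ‖L y‖ ≤ ‖(L : F →L[ℝ] E)‖ * ‖y‖ := (L : F →L[ℝ] E).le_opNorm y
    have hLy : 0 < ‖L y‖ := norm_pos_iff.mpr (L.map_ne_zero_iff.mpr hy)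
    rw [le_div_iff₀ hLy, inv_mul_le_iff₀ hK]
    linarith [norm_nonneg y]
  · have hle : ‖y‖ ≤ ‖(L.symm : E →L[ℝ] F)‖ * ‖L y‖ := by
      simpa using (L.symm : E →L[ℝ] F).le_opNorm (L y)
    linarith [norm_nonneg (L y)]

lemma continuousAt_norm_div_norm (L : F ≃L[ℝ] E) {y : F} (hy : y ≠ 0) :
    ContinuousAt (fun y => ‖y‖ / ‖L y‖) y :=
  ContinuousAt.div (by fun_prop) (by fun_prop) (norm_ne_zero_iff.mpr (L.map_ne_zero_iff.mpr hy))

lemma norm_div_norm_smul (L : F ≃L[ℝ] E) (y : F) {t : ℝ} (ht : t ≠ 0) :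
    ‖t • y‖ / ‖L (t • y)‖ = ‖y‖ / ‖L y‖ := by
  rw [map_smul, norm_smul, norm_smul, mul_div_mul_left _ _ (norm_ne_zero_iff.mpr ht)]

lemma norm_div_norm_mul_norm (L : F ≃L[ℝ] E) (y : F) : ‖y‖ / ‖L y‖ * ‖L y‖ = ‖y‖ :=
  div_mul_cancel_of_imp fun h => by simpa using h

variable [FiniteDimensional ℝ F]

lemma exists_homeomorph_round_inner (L : F ≃L[ℝ] E) {l : ℝ} (hl : 1 < l) :
    ∃ r > 0, ∃ h : F ≃ₜ F, h '' ball 0 1 = L ⁻¹' ball 0 r ∧ EqOn h id (ball 0 l)ᶜ ∧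
      L ⁻¹' closedBall 0 r ⊆ closedBall 0 1 := by
  obtain ⟨m, hm, B, hB, hbound, hbound'⟩ := exists_bounds_norm_div_norm L
  have hr : 0 < B⁻¹ := inv_pos.mpr hB
  obtain ⟨h, ρ, hh, hρ, hin, hout⟩ := exists_homeomorph_interpolating_smul_self
    (β₁ := fun y => B⁻¹ * (‖y‖ / ‖L y‖)) (β₂ := fun _ => 1) hl (mul_pos hr hm)
    (fun y hy => mul_le_mul_of_nonneg_left (hbound y hy) hr.le)
    (fun y _ => (inv_mul_le_iff₀ hB).mpr ((hbound' y).trans_eq (mul_one B).symm))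
    (fun _ _ => le_rfl) (fun y hy => continuousAt_const.mul (continuousAt_norm_div_norm L hy))
    (fun _ _ => continuousAt_const) (fun y t ht => by rw [norm_div_norm_smul L y ht])
    (fun _ _ _ => rfl)
  have hnorm (y : F) : B⁻¹ * (‖y‖ / ‖L y‖) * ‖L y‖ = B⁻¹ * ‖y‖ := by
    rw [mul_assoc, norm_div_norm_mul_norm]
  have hnear (y : F) (hy : ‖y‖ ≤ 1) : ‖L (h y)‖ = B⁻¹ * ‖y‖ := by
    rw [hh, hin y hy, map_smul, norm_smul, Real.norm_of_nonneg (by positivity), hnorm]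
  have hfar (y : F) (hy : 1 < ‖y‖) : B⁻¹ ≤ ‖L (h y)‖ := by
    have hle := (hρ y (norm_pos_iff.mp (one_pos.trans hy))).1
    rw [hh, map_smul, norm_smul]
    calc B⁻¹ ≤ B⁻¹ * ‖y‖ := le_mul_of_one_le_right hr.le hy.le
      _ = B⁻¹ * (‖y‖ / ‖L y‖) * ‖L y‖ := (hnorm y).symm
      _ ≤ ‖ρ y‖ * ‖L y‖ := by gcongr; exact hle.trans (le_abs_self _)
  refine ⟨B⁻¹, hr, h, ?_, fun y hy => ?_, fun y hy => ?_⟩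
  · rw [← h.image_preimage (L ⁻¹' ball 0 B⁻¹)]
    congr 1
    ext y
    simp only [mem_preimage, mem_ball_zero_iff]
    rcases le_or_gt ‖y‖ 1 with hy | hy
    · rw [hnear y hy, mul_lt_iff_lt_one_right hr]
    · exact iff_of_false hy.not_gt (hfar y hy).not_gt
  · rw [hh, hout y (by simpa using hy), one_smul, id]
  · rw [mem_preimage, mem_closedBall_zero_iff] at hy
    rw [mem_closedBall_zero_iff, ← mul_inv_cancel₀ hB.ne']
    calc ‖y‖ = ‖y‖ / ‖L y‖ * ‖L y‖ := (norm_div_norm_mul_norm L y).symm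
      _ ≤ B * B⁻¹ := by gcongr; exact hbound' y

lemma exists_homeomorph_round_outer (L : F ≃L[ℝ] E) {s : ℝ} (hs : s < 1) :
    ∃ κ > (0 : ℝ), ∃ Ψ : F ≃ₜ E, Ψ '' closedBall 0 1 = closedBall 0 1 ∧
      Ψ '' ball 0 1 = ball 0 1 ∧ EqOn Ψ (fun y => κ • L y) (closedBall 0 s) := by
  obtain ⟨m, hm, B, -, hbound, hbound'⟩ := exists_bounds_norm_div_norm L
  obtain ⟨h, ρ, hh, hρ, hin, hout⟩ := exists_homeomorph_interpolating_smul_self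
    (β₁ := fun _ => m) (β₂ := fun y => ‖y‖ / ‖L y‖) hs hm (fun _ _ => le_rfl)
    hbound (fun y _ => hbound' y) (fun _ _ => continuousAt_const)
    (fun y hy => continuousAt_norm_div_norm L hy) (fun _ _ _ => rfl)
    (fun y t ht => norm_div_norm_smul L y ht)
  let Ψ : F ≃ₜ E := h.trans L.toHomeomorph
  have hΨ (y : F) : Ψ y = ρ y • L y := (congrArg L (hh y)).trans (map_smul L _ _)
  have hle (y : F) : ‖Ψ y‖ ≤ ‖y‖ := by
    rcases eq_or_ne y 0 with rfl | hy
    · simp [hΨ]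
    · rw [hΨ, norm_smul, Real.norm_of_nonneg (hm.le.trans (hρ y hy).1)]
      exact (mul_le_mul_of_nonneg_right (hρ y hy).2 (norm_nonneg _)).trans_eq
        (norm_div_norm_mul_norm L y)
  have hfar (y : F) (hy : 1 ≤ ‖y‖) : ‖Ψ y‖ = ‖y‖ := by
    rw [hΨ, hout y hy, norm_smul, Real.norm_of_nonneg (by positivity), norm_div_norm_mul_norm]
  refine ⟨m, hm, Ψ, ?_, ?_, fun y hy => ?_⟩
  · rw [← Ψ.image_preimage (closedBall 0 1)]
    congr 1
    ext y
    simp only [mem_preimage, mem_closedBall_zero_iff]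
    exact ⟨(hle y).trans, fun hy => le_of_not_gt fun h1 => by linarith [hfar y h1.le]⟩
  · rw [← Ψ.image_preimage (ball 0 1)]
    congr 1
    ext y
    simp only [mem_preimage, mem_ball_zero_iff]
    exact ⟨(hle y).trans_lt, fun hy => lt_of_not_ge fun h1 => by linarith [hfar y h1]⟩
  · rw [hΨ, hin y (mem_closedBall_zero_iff.mp hy)]

end Rounding

section Enlarge

variable {F : Type*} [NormedAddCommGroup F] [NormedSpace ℝ F] [FiniteDimensional ℝ F]

lemma eventually_nhdsGT_closedBall_subset {x : F} {r : ℝ} (hr : 0 ≤ r) {U : Set F} (hU : IsOpen U)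
    (h : closedBall x r ⊆ U) : ∀ᶠ s in 𝓝[>] r, closedBall x s ⊆ U := by
  have : ProperSpace F := FiniteDimensional.proper_real F
  obtain ⟨δ, hδ, hsub⟩ := (isCompact_closedBall x r).exists_cthickening_subset_open hU h
  rw [cthickening_closedBall hδ.le hr] at hsub
  filter_upwards [Ioo_mem_nhdsGT (lt_add_of_pos_left r hδ)] with s hs
  exact (closedBall_subset_closedBall hs.2.le).trans hsub

lemma exists_one_lt_image_closedBall {ι : Type*} [Finite ι] {e : ι → F ≃ᴬ[ℝ] F}
    (he : ∀ i, e i '' closedBall 0 1 ⊆ ball 0 1)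
    (hdisj : Pairwise fun i j => Disjoint (e i '' closedBall 0 1) (e j '' closedBall 0 1)) :
    ∃ l > (1 : ℝ), (∀ i, e i '' closedBall 0 l ⊆ ball 0 1) ∧
      Pairwise fun i j => Disjoint (e i '' closedBall 0 l) (e j '' closedBall 0 l) := by
  have hcpt (i : ι) : IsCompact (e i '' closedBall 0 1) :=
    (isCompact_closedBall 0 1).image (e i).continuous
  have hin : ∀ᶠ l in 𝓝[>] (1 : ℝ), ∀ i, e i '' closedBall 0 l ⊆ ball 0 1 := by
    simp only [image_subset_iff] at he ⊢
    exact eventually_all.mpr fun i =>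
      eventually_nhdsGT_closedBall_subset zero_le_one (isOpen_ball.preimage (e i).continuous) (he i)
  have hpair : ∀ᶠ l in 𝓝[>] (1 : ℝ), ∀ i j, i ≠ j →
      Disjoint (e i '' closedBall 0 l) (e j '' closedBall 0 l) := by
    refine eventually_all.mpr fun i => eventually_all.mpr fun j => eventually_all.mpr fun hij => ?_
    obtain ⟨U, V, hU, hV, hiU, hjV, hUV⟩ :=
      SeparatedNhds.of_isCompact_isCompact (hcpt i) (hcpt j) (hdisj hij)
    filter_upwards
      [eventually_nhdsGT_closedBall_subset zero_le_one (hU.preimage (e i).continuous)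
          (image_subset_iff.mp hiU),
        eventually_nhdsGT_closedBall_subset zero_le_one (hV.preimage (e j).continuous)
          (image_subset_iff.mp hjV)]
      with l hl hl'
    exact hUV.mono (image_subset_iff.mpr hl) (image_subset_iff.mpr hl')
  obtain ⟨l, hl, hl', hl''⟩ := (eventually_mem_nhdsWithin.and (hin.and hpair)).exists
  exact ⟨l, hl, hl', fun i j => hl'' i j⟩

end Enlarge

lemma exists_homeomorph_eqOn_of_pairwise_disjoint {X ι : Type*} [TopologicalSpace X] [Finite ι]
    {N : ι → Set X} (hN : Pairwise fun i j => Disjoint (N i) (N j)) {h : ι → X ≃ₜ X}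
    (hh : ∀ i, EqOn (h i) id (N i)ᶜ) :
    ∃ H : X ≃ₜ X, (∀ i, EqOn H (h i) (N i)) ∧ EqOn H id (⋃ i, N i)ᶜ := by
  classical
  have := Fintype.ofFinite ι
  have hmaps (i : ι) : MapsTo (h i) (N i) (N i) := fun x hx => by
    by_contra hcon
    exact hcon (by rwa [(h i).injective (hh i hcon)])
  suffices ∀ s : Finset ι, ∃ H : X ≃ₜ X, (∀ i ∈ s, EqOn H (h i) (N i)) ∧
      EqOn H id (⋃ i ∈ s, N i)ᶜ by simpa using this Finset.univ
  intro s
  induction s using Finset.induction_on with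
  | empty => exact ⟨Homeomorph.refl X, by simp, fun x _ => rfl⟩
  | insert i s his ih =>
    obtain ⟨H, hHs, hHid⟩ := ih
    have hi : EqOn H id (N i) := fun x hx => hHid fun hx' => by
      obtain ⟨j, hj, hxj⟩ := mem_iUnion₂.mp hx'
      exact disjoint_left.mp (hN (ne_of_mem_of_not_mem hj his)) hxj hx
    refine ⟨(h i).trans H, ?_, fun x hx => ?_⟩
    · simp only [Finset.forall_mem_insert]
      refine ⟨fun x hx => hi (hmaps i hx), fun j hj x hx => ?_⟩
      have hxi : x ∈ (N i)ᶜ := disjoint_left.mp (hN (ne_of_mem_of_not_mem hj his)) hx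
      rw [Homeomorph.trans_apply, hh i hxi, id, hHs j hj hx]
    · rw [Finset.set_biUnion_insert, compl_union] at hx
      rw [Homeomorph.trans_apply, hh i hx.1, id, hHid hx.2, id]

section TopologicalBallWithHoles

variable {E : Type*} [SeminormedAddCommGroup E]

/-- `D` is homeomorphic to the closed unit ball of `E` with finitely many open balls cut out, whose
closures are pairwise disjoint and contained in the open unit ball. -/
def IsTopologicalBallWithHoles (E : Type*) [SeminormedAddCommGroup E] {X : Type*}
    [TopologicalSpace X] (D : Set X) : Prop :=
  ∃ (n : ℕ) (c : Fin n → E) (r : Fin n → ℝ),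
    (∀ i, 0 < r i) ∧ (∀ i, closedBall (c i) (r i) ⊆ ball 0 1) ∧
    (Pairwise fun i j => Disjoint (closedBall (c i) (r i)) (closedBall (c j) (r j))) ∧
    Nonempty (D ≃ₜ ↥(closedBall (0 : E) 1 \ ⋃ i, ball (c i) (r i)))

lemma IsTopologicalBallWithHoles.of_homeomorph {X Y : Type*} [TopologicalSpace X]
    [TopologicalSpace Y] {A : Set X} {B : Set Y} (hB : IsTopologicalBallWithHoles E B)
    (h : A ≃ₜ B) : IsTopologicalBallWithHoles E A := by
  obtain ⟨n, c, r, hr, hc, hdisj, ⟨f⟩⟩ := hB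
  exact ⟨n, c, r, hr, hc, hdisj, ⟨h.trans f⟩⟩

lemma isTopologicalBallWithHoles_closedBall_sdiff {ι : Type*} [Finite ι] {c : ι → E} {r : ι → ℝ}
    (hr : ∀ i, 0 < r i) (hc : ∀ i, closedBall (c i) (r i) ⊆ ball 0 1)
    (hdisj : Pairwise fun i j => Disjoint (closedBall (c i) (r i)) (closedBall (c j) (r j))) :
    IsTopologicalBallWithHoles E (closedBall (0 : E) 1 \ ⋃ i, ball (c i) (r i)) := by
  obtain ⟨n, ⟨φ⟩⟩ := Finite.exists_equiv_fin ι
  refine ⟨n, c ∘ φ.symm, r ∘ φ.symm, fun i => hr _, fun i => hc _,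
    fun i j hij => hdisj (φ.symm.injective.ne hij), ⟨Homeomorph.setCongr ?_⟩⟩
  exact congrArg _ (φ.symm.surjective.iUnion_comp fun i => ball (c i) (r i)).symm

end TopologicalBallWithHoles

section RoundModel

variable {E F : Type*} [NormedAddCommGroup E] [NormedSpace ℝ E] [NormedAddCommGroup F]
  [NormedSpace ℝ F] [FiniteDimensional ℝ F]

lemma exists_homeomorph_round_hole (L : F ≃L[ℝ] E) (e : F ≃ᴬ[ℝ] F) {l : ℝ} (hl : 1 < l) :
    ∃ r > 0, ∃ h : F ≃ₜ F, h '' (e '' ball 0 1) = L ⁻¹' ball (L (e 0)) r ∧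
      EqOn h id (e '' ball 0 l)ᶜ ∧ L ⁻¹' closedBall (L (e 0)) r ⊆ e '' closedBall 0 1 := by
  let A : F ≃L[ℝ] E := e.toAffineEquiv.linear.toContinuousLinearEquiv.trans L
  have hA (x : F) : L (e x) - L (e 0) = A x := by
    have h : e.toAffineEquiv.linear (x - 0) = e x - e 0 :=
      e.toAffineEquiv.toAffineMap.linearMap_vsub x 0
    rw [← map_sub, ← h, sub_zero]
    rfl
  obtain ⟨r, hr, h, hball, hid, hsub⟩ := exists_homeomorph_round_inner A hl
  have himage (s : Set F) : e.symm.toHomeomorph.trans (h.trans e.toHomeomorph) '' (e '' s) =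
      e '' (h '' s) := by
    rw [image_homeomorph_trans, image_homeomorph_trans]
    exact congrArg (fun t => e '' (h '' t)) (e.symm_image_image s)
  refine ⟨r, hr, e.symm.toHomeomorph.trans (h.trans e.toHomeomorph), ?_, fun y hy => ?_, ?_⟩
  · rw [himage, hball, ← e.image_preimage (L ⁻¹' ball _ r)]
    congr 1
    ext x
    simp only [mem_preimage, mem_ball_iff_norm, hA, sub_zero]
  · have hy' : e.symm y ∈ (ball 0 l)ᶜ := fun h => hy ⟨_, h, e.apply_symm_apply y⟩
    change e (h (e.symm y)) = y
    rw [hid hy', id, e.apply_symm_apply]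
  · intro y hy
    refine ⟨e.symm y, hsub ?_, e.apply_symm_apply y⟩
    rwa [mem_preimage, mem_closedBall_zero_iff, ← hA, e.apply_symm_apply, ← mem_closedBall_iff_norm]

lemma exists_homeomorph_round_holes {ι : Type*} [Finite ι] (L : F ≃L[ℝ] E) {e : ι → F ≃ᴬ[ℝ] F}
    (he : ∀ i, e i '' closedBall 0 1 ⊆ ball 0 1)
    (hdisj : Pairwise fun i j => Disjoint (e i '' closedBall 0 1) (e j '' closedBall 0 1)) :
    ∃ r : ι → ℝ, (∀ i, 0 < r i) ∧
      (∀ i, L ⁻¹' closedBall (L (e i 0)) (r i) ⊆ e i '' closedBall 0 1) ∧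
      ∃ H : F ≃ₜ F, H '' closedBall 0 1 = closedBall 0 1 ∧
        ∀ i, H '' (e i '' ball 0 1) = L ⁻¹' ball (L (e i 0)) (r i) := by
  obtain ⟨l, hl, hin, hpair⟩ := exists_one_lt_image_closedBall he hdisj
  choose r hr h hball hid hsub using fun i => exists_homeomorph_round_hole L (e i) hl
  have hN (i : ι) : e i '' ball 0 l ⊆ e i '' closedBall 0 l := image_mono ball_subset_closedBall
  obtain ⟨H, hH, hHid⟩ := exists_homeomorph_eqOn_of_pairwise_disjoint
    (fun i j hij => (hpair hij).mono (hN i) (hN j)) hid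
  refine ⟨r, hr, hsub, H, compl_injective ?_, fun i => ?_⟩
  · rw [← image_compl_eq H.bijective]
    refine (hHid.mono (compl_subset_compl.mpr ?_)).image_eq_self
    exact iUnion_subset fun i => ((hN i).trans (hin i)).trans ball_subset_closedBall
  · rw [← hball i, ((hH i).mono (image_mono (ball_subset_ball hl.le))).image_eq]

open scoped Pointwise in
theorem IsBallWithHoles.isTopologicalBallWithHoles {D : Set F} (hD : IsBallWithHoles D)
    (L : F ≃L[ℝ] E) : IsTopologicalBallWithHoles E D := by
  obtain ⟨ι, _, e, he, hdisj, rfl⟩ := hD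
  obtain ⟨r, hr, hsub, H, hH, hHball⟩ := exists_homeomorph_round_holes L he hdisj
  obtain ⟨s, hs, hes⟩ := exists_lt_subset_ball
    (isClosed_iUnion_of_finite fun i =>
      ((isCompact_closedBall 0 1).image (e i).continuous).isClosed) (iUnion_subset he)
  obtain ⟨κ, hκ, Ψ, hΨclosedBall, hΨball, hΨ⟩ := exists_homeomorph_round_outer L hs
  have hΨimage (i : ι) {B : Set E} (hB : B ⊆ closedBall (L (e i 0)) (r i)) :
      Ψ '' (L ⁻¹' B) = κ • B := by
    have hBs : L ⁻¹' B ⊆ closedBall 0 s := (preimage_mono hB).trans <| (hsub i).trans <|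
      (subset_iUnion (fun i => e i '' closedBall 0 1) i).trans <| hes.trans ball_subset_closedBall
    rw [(hΨ.mono hBs).image_eq, ← image_smul, ← image_image, L.surjective.image_preimage]
  have hclosed (i : ι) : Ψ '' (L ⁻¹' closedBall (L (e i 0)) (r i)) =
      closedBall (κ • L (e i 0)) (κ * r i) := by
    rw [hΨimage i subset_rfl, smul_closedBall' hκ.ne', Real.norm_of_nonneg hκ.le]
  have hopen (i : ι) : Ψ '' (L ⁻¹' ball (L (e i 0)) (r i)) = ball (κ • L (e i 0)) (κ * r i) := by
    rw [hΨimage i ball_subset_closedBall, _root_.smul_ball hκ.ne', Real.norm_of_nonneg hκ.le]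
  have himage : H.trans Ψ '' (closedBall 0 1 \ ⋃ i, e i '' ball 0 1) =
      closedBall 0 1 \ ⋃ i, ball (κ • L (e i 0)) (κ * r i) := by
    rw [image_homeomorph_trans, image_sdiff H.injective, image_sdiff Ψ.injective, hH, hΨclosedBall,
      image_iUnion, image_iUnion]
    simp only [hHball, hopen]
  refine .of_homeomorph (isTopologicalBallWithHoles_closedBall_sdiff (fun i => mul_pos hκ (hr i))
    (fun i => ?_) fun i j hij => ?_) (((H.trans Ψ).image _).trans (.setCongr himage))
  · rw [← hclosed, ← hΨball]
    exact image_mono ((hsub i).trans (he i))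
  · simp only [← hclosed]
    exact (disjoint_image_iff Ψ.injective).mpr ((hdisj hij).mono (hsub i) (hsub j))

theorem HasHoledSquareModel.isTopologicalBallWithHoles {A : Set (ℝ × ℝ)}
    (hA : HasHoledSquareModel A) :
    IsTopologicalBallWithHoles (EuclideanSpace ℝ (Fin 2)) A := by
  obtain ⟨Φ, -, hD⟩ := hA
  let L : (ℝ × ℝ) ≃L[ℝ] EuclideanSpace ℝ (Fin 2) :=
    (ContinuousLinearEquiv.finTwoArrow ℝ ℝ).symm.trans (EuclideanSpace.equiv (Fin 2) ℝ).symm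
  exact (hD.isTopologicalBallWithHoles L).of_homeomorph (Φ.image A)

end RoundModel

lemma IsWellComposed.of_adjacent_mem_iff {S T : Set (ℤ × ℤ)} (hT : IsWellComposed T) (hST : S ⊆ T)
    (hrow : ∀ k l, (k, l) ∈ T → (k + 1, l) ∈ T → ((k, l) ∈ S ↔ (k + 1, l) ∈ S))
    (hcol : ∀ k l, (k, l) ∈ T → (k, l + 1) ∈ T → ((k, l) ∈ S ↔ (k, l + 1) ∈ S)) :
    IsWellComposed S := by
  refine fun k l => ⟨fun ⟨h, h', hr, hl⟩ => ?_, fun ⟨h, h', hl, hr⟩ => ?_⟩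
  · exact (hT k l).1 ⟨hST h, hST h', fun ht => hr ((hrow k l (hST h) ht).mp h),
      fun ht => hl ((hcol k l (hST h) ht).mp h)⟩
  · exact (hT k l).2 ⟨hST h, hST h', fun ht => hl ((hrow k l ht (hST h)).mpr h),
      fun ht => hr ((hcol (k + 1) l (hST h) ht).mp h)⟩

lemma subset_connectedComponentIn_of_mem {X : Type*} [TopologicalSpace X] {A V : Set X} {x v : X}
    (hV : IsPreconnected V) (hVA : V ⊆ A) (hv : v ∈ V) (hvx : v ∈ connectedComponentIn A x) :
    V ⊆ connectedComponentIn A x := by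
  rw [connectedComponentIn_eq hvx]
  exact hV.subset_connectedComponentIn hv hVA

section Component

variable {a : ℤ → ℝ} {A : Set (ℝ × ℝ)} {T : Set (ℤ × ℤ)} {z : ℝ × ℝ}

lemma cellUnion_sdiff_cellUnion_subset {X Y : Set (ℤ × ℤ)} :
    cellUnion a X \ cellUnion a Y ⊆ cellUnion a (X \ Y) := by
  rintro z ⟨hzX, hzY⟩
  obtain ⟨p, hp, hzp⟩ := mem_cellUnion.mp hzX
  exact cell_subset_cellUnion (X := X \ Y) ⟨hp, fun h => hzY (cell_subset_cellUnion h hzp)⟩ hzp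

/-- The indices of the grid cells whose interior lies in `C`. -/
def innerCells (a : ℤ → ℝ) (C : Set (ℝ × ℝ)) : Set (ℤ × ℤ) :=
  {p | interior (cell a p) ⊆ C}

namespace IsGrid

variable (ha : IsGrid a)
include ha

lemma interior_cellUnion_sdiff_subset {X Y : Set (ℤ × ℤ)} :
    interior (cellUnion a (X \ Y)) ⊆ cellUnion a X \ cellUnion a Y := by
  refine subset_sdiff.mpr ⟨interior_subset.trans (cellUnion_mono sdiff_subset), ?_⟩
  rw [← subset_compl_iff_disjoint_left, ← closure_compl, ha.closure_compl_cellUnion]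
  exact cellUnion_mono fun p hp hp' => hp'.2 hp

lemma interior_cell_nonempty (p : ℤ × ℤ) : (interior (cell a p)).Nonempty := by
  rw [cell, interior_prod_eq, interior_Icc, interior_Icc]
  exact (nonempty_Ioo.mpr (ha.lt_succ _)).prod (nonempty_Ioo.mpr (ha.lt_succ _))

lemma cellUnion_innerCells_subset_closure (C : Set (ℝ × ℝ)) :
    cellUnion a (innerCells a C) ⊆ closure C :=
  iUnion₂_subset fun p hp => (ha.closure_interior_cell p).symm.subset.trans (closure_mono hp)

lemma innerCells_subset {C : Set (ℝ × ℝ)} (h : C ⊆ cellUnion a T) : innerCells a C ⊆ T := by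
  intro p hp
  obtain ⟨z, hz⟩ := ha.interior_cell_nonempty p
  exact (ha.mem_cellUnion_iff_of_mem_interior hz).mp (h (hp hz))

lemma finite_of_isBounded_cellUnion {S : Set (ℤ × ℤ)} (h : Bornology.IsBounded (cellUnion a S)) :
    S.Finite := by
  obtain ⟨R, hR⟩ := h.subset_closedBall 0
  obtain ⟨i, hi⟩ := ha.exists_mem_Ico (-R)
  obtain ⟨j, hj⟩ := ha.exists_mem_Ico R
  have hbound {k : ℤ} (hk : |a k| ≤ R) : k ∈ Icc i j := by
    have hik : a i < a (k + 1) := (hi.1.trans (abs_le.mp hk).1).trans_lt (ha.lt_succ k)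
    have hkj : a k < a (j + 1) := (abs_le.mp hk).2.trans_lt hj.2
    exact ⟨Int.lt_add_one_iff.mp (ha.strictMono.lt_iff_lt.mp hik),
      Int.lt_add_one_iff.mp (ha.strictMono.lt_iff_lt.mp hkj)⟩
  refine ((finite_Icc i j).prod (finite_Icc i j)).subset fun p hp => ?_
  have hcorner : (a p.1, a p.2) ∈ closedBall 0 R :=
    hR (cell_subset_cellUnion hp
      ⟨left_mem_Icc.mpr (ha.lt_succ _).le, left_mem_Icc.mpr (ha.lt_succ _).le⟩)
  rw [mem_closedBall_zero_iff, Prod.norm_def, sup_le_iff] at hcorner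
  exact ⟨hbound hcorner.1, hbound hcorner.2⟩

lemma closure_connectedComponentIn (hT : interior (cellUnion a T) ⊆ A) (hA : A ⊆ cellUnion a T) :
    closure (connectedComponentIn A z) = cellUnion a (innerCells a (connectedComponentIn A z)) := by
  refine subset_antisymm (closure_minimal (fun x hx => ?_) (ha.isClosed_cellUnion _))
    (ha.cellUnion_innerCells_subset_closure _)
  have hxA := connectedComponentIn_subset _ _ hx
  obtain ⟨p, hp, hxp⟩ := mem_cellUnion.mp (hA hxA)
  have hpA : interior (cell a p) ⊆ A := (interior_mono (cell_subset_cellUnion hp)).trans hT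
  have hcell : Convex ℝ (cell a p) := (convex_Icc _ _).prod (convex_Icc _ _)
  have hpre : IsPreconnected (insert x (interior (cell a p))) :=
    hcell.interior.isPreconnected.subset_closure (subset_insert _ _)
      (insert_subset ((ha.closure_interior_cell p).symm ▸ hxp) subset_closure)
  refine cell_subset_cellUnion (X := innerCells a _) ?_ hxp
  exact (subset_insert _ _).trans
    (subset_connectedComponentIn_of_mem hpre (insert_subset hxA hpA) (mem_insert _ _) hx)

lemma mem_innerCells_iff_of_rectangle {i i' j j' : ℤ} {p q : ℤ × ℤ}
    (hT : interior (cellUnion a T) ⊆ A) (hrect : Ico i i' ×ˢ Ico j j' ⊆ T)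
    (hp : p ∈ Ico i i' ×ˢ Ico j j') (hq : q ∈ Ico i i' ×ˢ Ico j j') :
    p ∈ innerCells a (connectedComponentIn A z) ↔ q ∈ innerCells a (connectedComponentIn A z) := by
  have hunion : cellUnion a (Ico i i' ×ˢ Ico j j') = Icc (a i) (a i') ×ˢ Icc (a j) (a j') :=
    ha.cellUnion_rectangle (hp.1.1.trans_lt hp.1.2) (hp.2.1.trans_lt hp.2.2)
  have hpre : IsPreconnected (interior (cellUnion a (Ico i i' ×ˢ Ico j j'))) := by
    rw [hunion]
    exact ((convex_Icc _ _).prod (convex_Icc _ _)).interior.isPreconnected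
  have hsub : interior (cellUnion a (Ico i i' ×ˢ Ico j j')) ⊆ A :=
    (interior_mono (cellUnion_mono hrect)).trans hT
  suffices ∀ p ∈ Ico i i' ×ˢ Ico j j', ∀ q ∈ Ico i i' ×ˢ Ico j j',
      p ∈ innerCells a (connectedComponentIn A z) → q ∈ innerCells a (connectedComponentIn A z) from
    ⟨this p hp q hq, this q hq p hp⟩
  intro p hp q hq hpz
  obtain ⟨x, hx⟩ := ha.interior_cell_nonempty p
  exact (interior_mono (cell_subset_cellUnion hq)).trans <| subset_connectedComponentIn_of_mem
    hpre hsub (interior_mono (cell_subset_cellUnion hp) hx) (hpz hx)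

lemma isWellComposed_innerCells (hwc : IsWellComposed T) (hT : interior (cellUnion a T) ⊆ A)
    (hA : A ⊆ cellUnion a T) : IsWellComposed (innerCells a (connectedComponentIn A z)) := by
  refine hwc.of_adjacent_mem_iff
    (ha.innerCells_subset ((connectedComponentIn_subset _ _).trans hA))
    (fun k l h₀ h₁ => ?_) fun k l h₀ h₁ => ?_
  · refine ha.mem_innerCells_iff_of_rectangle (i := k) (i' := k + 2) (j := l) (j' := l + 1) hT ?_
      (by simp) (by simp)
    rintro ⟨k', l'⟩ ⟨⟨hk, hk'⟩, hl, hl'⟩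
    obtain rfl : l' = l := by lia
    obtain rfl | rfl : k' = k ∨ k' = k + 1 := by lia
    exacts [h₀, h₁]
  · refine ha.mem_innerCells_iff_of_rectangle (i := k) (i' := k + 1) (j := l) (j' := l + 2) hT ?_
      (by simp) (by simp)
    rintro ⟨k', l'⟩ ⟨⟨hk, hk'⟩, hl, hl'⟩
    obtain rfl : k' = k := by lia
    obtain rfl | rfl : l' = l ∨ l' = l + 1 := by lia
    exacts [h₀, h₁]

theorem hasHoledSquareModel_closure_connectedComponentIn (hwc : IsWellComposed T)
    (hT : interior (cellUnion a T) ⊆ A) (hA : A ⊆ cellUnion a T) (hz : z ∈ A)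
    (hbdd : Bornology.IsBounded (connectedComponentIn A z)) :
    HasHoledSquareModel (closure (connectedComponentIn A z)) := by
  have hclosure := ha.closure_connectedComponentIn (z := z) hT hA
  have hconn : IsConnected (closure (connectedComponentIn A z)) :=
    (isConnected_connectedComponentIn_iff.mpr hz).closure
  rw [hclosure] at hconn ⊢
  exact (ha.isWellComposed_innerCells hwc hT hA).hasHoledSquareModel ha
    (ha.finite_of_isBounded_cellUnion (hclosure ▸ hbdd.closure))
    (ha.cellUnion_nonempty.mp hconn.nonempty) hconn.isPreconnected

end IsGrid

end Component

lemma isWellComposed_of_adjacent_columns_comparable {X : Set (ℤ × ℤ)}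
    (h : ∀ k, Prod.mk k ⁻¹' X ⊆ Prod.mk (k + 1) ⁻¹' X ∨ Prod.mk (k + 1) ⁻¹' X ⊆ Prod.mk k ⁻¹' X) :
    IsWellComposed X := by
  intro k l
  rcases h k with h | h
  · exact ⟨fun ⟨h₀₀, _, h₁₀, _⟩ => h₁₀ (h h₀₀), fun ⟨_, h₀₁, _, h₁₁⟩ => h₁₁ (h h₀₁)⟩
  · exact ⟨fun ⟨_, h₁₁, _, h₀₁⟩ => h₀₁ (h h₁₁), fun ⟨h₁₀, _, h₀₀, _⟩ => h₀₀ (h h₁₀)⟩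

section GridLine

variable {δ₁ δ₂ : ℝ}

/-- The increasing enumeration of the numbers `k - δ₂`, `k - δ₁`, `k + δ₁`, `k + δ₂` for `k : ℤ`:
these four get the indices `4 * k`, `4 * k + 1`, `4 * k + 2`, `4 * k + 3`. -/
def gridLine (δ₁ δ₂ : ℝ) (n : ℤ) : ℝ :=
  (Int.divModEquiv 4 n).1 + ![-δ₂, -δ₁, δ₁, δ₂] (Int.divModEquiv 4 n).2

lemma gridLine_mul_add (k : ℤ) (r : Fin 4) :
    gridLine δ₁ δ₂ (4 * k + r.val) = k + ![-δ₂, -δ₁, δ₁, δ₂] r := by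
  have h : Int.divModEquiv 4 (4 * k + r.val) = (k, r) := by
    rw [← Equiv.eq_symm_apply, Int.divModEquiv_symm_apply, mul_comm]
    rfl
  rw [gridLine, h]

lemma gridLine_four_mul (k : ℤ) : gridLine δ₁ δ₂ (4 * k) = k - δ₂ := by
  simpa [sub_eq_add_neg] using gridLine_mul_add k 0

lemma gridLine_four_mul_add_one (k : ℤ) : gridLine δ₁ δ₂ (4 * k + 1) = k - δ₁ := by
  simpa [sub_eq_add_neg] using gridLine_mul_add k 1

lemma gridLine_four_mul_add_two (k : ℤ) : gridLine δ₁ δ₂ (4 * k + 2) = k + δ₁ := by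
  simpa using gridLine_mul_add k 2

lemma gridLine_four_mul_add_three (k : ℤ) : gridLine δ₁ δ₂ (4 * k + 3) = k + δ₂ := by
  simpa using gridLine_mul_add k 3

lemma strictMono_gridLine (h₀ : 0 < δ₁) (h₁₂ : δ₁ < δ₂) (h₂ : δ₂ < 1 / 2) :
    StrictMono (gridLine δ₁ δ₂) := by
  refine strictMono_int_of_lt_succ fun n => ?_
  obtain ⟨k, rfl | rfl | rfl | rfl⟩ :
      ∃ k, n = 4 * k ∨ n = 4 * k + 1 ∨ n = 4 * k + 2 ∨ n = 4 * k + 3 := ⟨n / 4, by lia⟩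
  · rw [gridLine_four_mul, gridLine_four_mul_add_one]
    linarith
  · rw [add_assoc, gridLine_four_mul_add_one, one_add_one_eq_two, gridLine_four_mul_add_two]
    linarith
  · rw [add_assoc, gridLine_four_mul_add_two, two_add_one_eq_three, gridLine_four_mul_add_three]
    linarith
  · rw [add_assoc, gridLine_four_mul_add_three, three_add_one_eq_four, ← mul_add_one,
      gridLine_four_mul]
    push_cast
    linarith

lemma isGrid_gridLine (h₀ : 0 < δ₁) (h₁₂ : δ₁ < δ₂) (h₂ : δ₂ < 1 / 2) :
    IsGrid (gridLine δ₁ δ₂) := by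
  refine .of_strictMono (strictMono_gridLine h₀ h₁₂ h₂) (fun x => ?_) fun x => ?_
  · obtain ⟨k, hk⟩ := exists_int_lt (x + δ₂)
    exact ⟨4 * k, by linarith [gridLine_four_mul (δ₁ := δ₁) (δ₂ := δ₂) k]⟩
  · obtain ⟨k, hk⟩ := exists_int_gt (x + δ₂)
    exact ⟨4 * k, by linarith [gridLine_four_mul (δ₁ := δ₁) (δ₂ := δ₂) k]⟩

end GridLine

section ThickCells

variable {S P G : Set (ℕ × ℕ)} {s t k : ℤ}

/-- The indices of the grid cells in the thickening of the image `S` by `δ`, when the grid is such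
that `k - δ` and `k + δ` are the lines with index `4 * k + 1 - s` and `4 * k + 2 + s`. -/
def thickCells (s : ℤ) (S : Set (ℕ × ℕ)) : Set (ℤ × ℤ) :=
  ⋃ p ∈ S, Ico (4 * (p.1 - 1) + 1 - s) (4 * p.1 + 2 + s) ×ˢ
    Ico (4 * (p.2 - 1) + 1 - s) (4 * p.2 + 2 + s)

lemma mem_thickCells {c : ℤ × ℤ} : c ∈ thickCells s S ↔
    ∃ p ∈ S, c.1 ∈ Ico (4 * (p.1 - 1 : ℤ) + 1 - s) (4 * p.1 + 2 + s) ∧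
      c.2 ∈ Ico (4 * (p.2 - 1 : ℤ) + 1 - s) (4 * p.2 + 2 + s) := by
  simp only [thickCells, mem_iUnion₂, mem_prod, exists_prop]

lemma preimage_thickCells_subset_succ (h : Even (k + s)) :
    Prod.mk k ⁻¹' thickCells s S ⊆ Prod.mk (k + 1) ⁻¹' thickCells s S := by
  intro l hl
  obtain ⟨p, hp, hk, hl⟩ := mem_thickCells.mp hl
  refine mem_thickCells.mpr ⟨p, hp, ?_, hl⟩
  rw [Int.even_iff] at h
  simp only [mem_Ico] at hk ⊢
  lia

lemma preimage_thickCells_succ_subset (h : Odd (k + s)) :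
    Prod.mk (k + 1) ⁻¹' thickCells s S ⊆ Prod.mk k ⁻¹' thickCells s S := by
  intro l hl
  obtain ⟨p, hp, hk, hl⟩ := mem_thickCells.mp hl
  refine mem_thickCells.mpr ⟨p, hp, ?_, hl⟩
  rw [Int.odd_iff] at h
  simp only [mem_Ico] at hk ⊢
  lia

lemma isWellComposed_thickCells_sdiff (h : Odd (s + t)) :
    IsWellComposed (thickCells s P \ thickCells t G) := by
  refine isWellComposed_of_adjacent_columns_comparable fun k => ?_
  rw [Int.odd_iff] at h
  rcases Int.even_or_odd (k + s) with hs | hs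
  · have ht : Odd (k + t) := by rw [Int.even_iff] at hs; rw [Int.odd_iff]; lia
    exact .inl (sdiff_subset_sdiff (preimage_thickCells_subset_succ hs)
      (preimage_thickCells_succ_subset ht))
  · have ht : Even (k + t) := by rw [Int.odd_iff] at hs; rw [Int.even_iff]; lia
    exact .inr (sdiff_subset_sdiff (preimage_thickCells_succ_subset hs)
      (preimage_thickCells_subset_succ ht))

end ThickCells

section Thick

variable {δ : ℝ}

lemma thick_eq_biUnion_closedBall (δ : ℝ) (X : Set Plane) :
    thick δ X = ⋃ x ∈ X, closedBall x δ := by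
  ext y
  simp only [thick, mem_ofPred_eq, mem_iUnion₂, mem_closedBall_iff_norm', exists_prop]

lemma thick_fg (δ : ℝ) (S : Set (ℕ × ℕ)) : thick δ (fg S) = ⋃ p ∈ S, thick δ (pixel p) := by
  simp only [thick_eq_biUnion_closedBall, fg, biUnion_iUnion]

lemma closedBall_eq_preimage_finTwoArrow (x : Plane) {r : ℝ} (hr : 0 ≤ r) : closedBall x r =
    Homeomorph.finTwoArrow ⁻¹' (Icc (x 0 - r) (x 0 + r) ×ˢ Icc (x 1 - r) (x 1 + r)) := by
  ext y
  simp only [closedBall_pi x hr, Real.closedBall_eq_Icc, mem_univ_pi, Fin.forall_fin_two]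
  rfl

lemma pixel_eq_closedBall (p : ℕ × ℕ) :
    pixel p = closedBall ![(p.1 : ℝ) - 1 / 2, (p.2 : ℝ) - 1 / 2] (1 / 2) := by
  rw [closedBall_eq_preimage_finTwoArrow _ one_half_pos.le]
  ext x
  have hsub (k : ℝ) : k - 1 / 2 - 1 / 2 = k - 1 := by ring
  simp only [Matrix.cons_val_zero, Matrix.cons_val_one, sub_add_cancel, hsub]
  rfl

lemma thick_pixel (hδ : 0 ≤ δ) (p : ℕ × ℕ) :
    thick δ (pixel p) = Homeomorph.finTwoArrow ⁻¹'
      (Icc ((p.1 - 1 : ℝ) - δ) (p.1 + δ) ×ˢ Icc ((p.2 - 1 : ℝ) - δ) (p.2 + δ)) := by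
  rw [pixel_eq_closedBall, thick_eq_biUnion_closedBall,
    ← (isCompact_closedBall _ _).cthickening_eq_biUnion_closedBall hδ,
    cthickening_closedBall hδ one_half_pos.le, closedBall_eq_preimage_finTwoArrow _ (by positivity)]
  have hlower (k : ℝ) : k - 1 / 2 - (δ + 1 / 2) = k - 1 - δ := by ring
  have hupper (k : ℝ) : k - 1 / 2 + (δ + 1 / 2) = k + δ := by ring
  simp only [Matrix.cons_val_zero, Matrix.cons_val_one, hlower, hupper]

lemma isBounded_fg {S : Set (ℕ × ℕ)} (hS : S.Finite) : Bornology.IsBounded (fg S) := by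
  refine (Bornology.isBounded_biUnion hS).mpr fun p _ => ?_
  rw [pixel_eq_closedBall]
  exact isBounded_closedBall

lemma isBounded_thick {X : Set Plane} (hX : Bornology.IsBounded X) :
    Bornology.IsBounded (thick δ X) := by
  refine (hX.cthickening (δ := δ)).subset ?_
  rw [thick_eq_biUnion_closedBall]
  exact iUnion₂_subset fun x hx => closedBall_subset_cthickening hx δ

lemma thick_fg_eq_preimage_cellUnion {a : ℤ → ℝ} (ha : IsGrid a) (hδ : 0 ≤ δ) {s : ℤ} (hs : 0 ≤ s)
    (hlower : ∀ k : ℤ, a (4 * k + 1 - s) = k - δ) (hupper : ∀ k : ℤ, a (4 * k + 2 + s) = k + δ)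
    (S : Set (ℕ × ℕ)) :
    thick δ (fg S) = Homeomorph.finTwoArrow ⁻¹' cellUnion a (thickCells s S) := by
  rw [thick_fg, thickCells, cellUnion_biUnion, preimage_iUnion₂]
  refine iUnion₂_congr fun p _ => ?_
  rw [thick_pixel hδ, ha.cellUnion_rectangle (by lia) (by lia), hlower, hlower, hupper,
    hupper]
  push_cast
  rfl

end Thick

theorem isTopologicalBallWithHoles_closure_of_isCompOf {a : ℤ → ℝ} {X Y : Set (ℤ × ℤ)}
    {C : Set Plane} (ha : IsGrid a) (hwc : IsWellComposed (X \ Y))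
    (hC : IsCompOf C (Homeomorph.finTwoArrow ⁻¹' (cellUnion a X \ cellUnion a Y)))
    (hbdd : Bornology.IsBounded C) : IsTopologicalBallWithHoles EPlane (closure C) := by
  obtain ⟨x, hx, rfl⟩ := hC
  let e : Plane ≃ₜ ℝ × ℝ := Homeomorph.finTwoArrow
  have himage : e '' connectedComponentIn (e ⁻¹' (cellUnion a X \ cellUnion a Y)) x =
      connectedComponentIn (cellUnion a X \ cellUnion a Y) (e x) := by
    rw [e.image_connectedComponentIn hx, e.image_preimage]
  have hbdd' : Bornology.IsBounded
      (connectedComponentIn (cellUnion a X \ cellUnion a Y) (e x)) := by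
    rw [← himage]
    exact (hbdd.isCompact_closure.image e.continuous).isBounded.subset (image_mono subset_closure)
  refine (ha.hasHoledSquareModel_closure_connectedComponentIn hwc
    ha.interior_cellUnion_sdiff_subset cellUnion_sdiff_cellUnion_subset hx
    hbdd').isTopologicalBallWithHoles.of_homeomorph ((e.image _).trans (.setCongr ?_))
  rw [e.image_closure, himage]

theorem component_closure_homeomorphic_diskWithHoles_general {P G : Set (ℕ × ℕ)} {δ₁ δ₂ : ℝ}
    (h₀ : 0 < δ₁) (h₁₂ : δ₁ < δ₂) (h₂ : δ₂ < 1 / 2) {C : Set Plane}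
    (hC : IsCompOf C (thick δ₁ (fg P) \ thick δ₂ (fg G)) ∨
      IsCompOf C (thick δ₂ (fg G) \ thick δ₁ (fg P)))
    (hbdd : Bornology.IsBounded C) : IsTopologicalBallWithHoles EPlane (closure C) := by
  have ha : IsGrid (gridLine δ₁ δ₂) := isGrid_gridLine h₀ h₁₂ h₂
  rw [thick_fg_eq_preimage_cellUnion ha h₀.le le_rfl
      (by simpa using gridLine_four_mul_add_one) (by simpa using gridLine_four_mul_add_two),
    thick_fg_eq_preimage_cellUnion ha (h₀.trans h₁₂).le zero_le_one
      (by simpa using gridLine_four_mul)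
      (by simpa [add_assoc, two_add_one_eq_three] using gridLine_four_mul_add_three)] at hC
  rcases hC with hC | hC
  · exact isTopologicalBallWithHoles_closure_of_isCompOf ha
      (isWellComposed_thickCells_sdiff (by decide)) hC hbdd
  · exact isTopologicalBallWithHoles_closure_of_isCompOf ha
      (isWellComposed_thickCells_sdiff (by decide)) hC hbdd

lemma IsCompOf.isBounded {C A : Set Plane} (hC : IsCompOf C A) (hA : Bornology.IsBounded A) :
    Bornology.IsBounded C := by
  obtain ⟨x, -, rfl⟩ := hC
  exact hA.subset (connectedComponentIn_subset _ _)

lemma isBounded_thick_fg {S : Set (ℕ × ℕ)} {h w : ℕ} (hS : OnGrid S h w) (δ : ℝ) :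
    Bornology.IsBounded (thick δ (fg S)) :=
  isBounded_thick (isBounded_fg (((finite_Icc 1 h).prod (finite_Icc 1 w)).subset hS))

/-- The closure of every connected component of `FP` (and of `FN`) is
homeomorphic to a closed Euclidean unit disk with finitely many open disks removed, the
removed disks having pairwise disjoint closures contained in the open unit disk. -/
theorem component_closure_homeomorphic_diskWithHoles
    (h w : ℕ) (P G : Set (ℕ × ℕ)) (hP : OnGrid P h w) (hG : OnGrid G h w)
    (ε : ℝ) (hε0 : 0 < ε) (hε : ε < 1 / 4)
    (C : Set Plane) (hC : IsCompOf C (FPset P G ε) ∨ IsCompOf C (FNset P G ε)) :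
    ∃ (n : ℕ) (c : Fin n → EPlane) (r : Fin n → ℝ),
      (∀ i, 0 < r i) ∧
      (∀ i, Metric.closedBall (c i) (r i) ⊆ Metric.ball (0 : EPlane) 1) ∧
      (Pairwise fun i j =>
        Disjoint (Metric.closedBall (c i) (r i)) (Metric.closedBall (c j) (r j))) ∧
      Nonempty (↥(closure C) ≃ₜ
        ↥(Metric.closedBall (0 : EPlane) 1 \ ⋃ i, Metric.ball (c i) (r i))) := by
  refine component_closure_homeomorphic_diskWithHoles_general (P := P) (G := G) hε0
    (by linarith : ε < 2 * ε) (by linarith) (hC.imp_right fun hC => ?_) ?_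
  · rwa [FNset, inter_comm] at hC
  · exact hC.elim (fun hC => hC.isBounded ((isBounded_thick_fg hP ε).subset inter_subset_left))
      fun hC => hC.isBounded ((isBounded_thick_fg hG (2 * ε)).subset inter_subset_right)

end
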